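/- Let k ≥ 3 be an odd integer and let H be a connected graph on n ≥ (10k)⁴ vertices whose average degree 2·e(H)/n is at most 2·(1 + (8k)^{−2}). Then R(C_k, H) = 2n − 1. -/

import Mathlib

/-- `G` has a copy in `C`: there is an injective graph homomorphism from `G` to `C`,
i.e. `C` contains `G` as a (not necessarily induced) subgraph. -/
def HasCopy {α β : Type*} (G : SimpleGraph α) (C : SimpleGraph β) : Prop :=
  ∃ f : G →g C, Function.Injective f

/-- The Ramsey number `R(G, H)`: the least `N` such that every red-blue colouring of the
edges of `K_N` (encoded by the graph `C` of red edges) contains a red copy of `G` or a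
blue copy of `H`. -/
noncomputable def ramseyNumber {α β : Type*} (G : SimpleGraph α) (H : SimpleGraph β) : ℕ :=
  sInf {N : ℕ | ∀ C : SimpleGraph (Fin N), HasCopy G C ∨ HasCopy H Cᶜ}

namespace RamAux
open scoped Classical
open Finset

/-- number of neighbours of `u` in `S` -/
noncomputable def dg {V : Type*} (H : SimpleGraph V) (S : Finset V) (u : V) : ℕ :=
  (S.filter (fun w => H.Adj u w)).card

/-- twice the number of edges inside `S` -/
noncomputable def E2 {V : Type*} (H : SimpleGraph V) (S : Finset V) : ℕ := ∑ u ∈ S, dg H S u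

/-- `f` embeds `H[S]` in the complement of `C`, inside `Z` -/
def Emb {V U : Type*} (C : SimpleGraph U) (H : SimpleGraph V) (S : Finset V) (Z : Finset U)
    (f : V → U) : Prop :=
  (∀ u ∈ S, ∀ w ∈ S, f u = f w → u = w) ∧ (∀ u ∈ S, f u ∈ Z) ∧
    ∀ u ∈ S, ∀ w ∈ S, H.Adj u w → ¬ C.Adj (f u) (f w)

def CutConn {V : Type*} (H : SimpleGraph V) (S : Finset V) : Prop :=
  ∀ T, T ⊆ S → T.Nonempty → T ≠ S → ∃ u ∈ T, ∃ w ∈ S, w ∉ T ∧ H.Adj u w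

theorem cyc_of_list {U : Type*} (C : SimpleGraph U) (k : ℕ) (hk : 3 ≤ k) (x : U) (l : List U)
    (hl : l.length + 1 = k) (hn : (x :: l).Nodup) (hc : (x :: l).IsChain C.Adj)
    (hlast : ∀ y ∈ l.getLast?, C.Adj y x) : HasCopy (SimpleGraph.cycleGraph k) C := by
  have hlen : (x :: l).length = k := by simpa using hl
  set L := x :: l with hL
  have key : ∀ u v : Fin k, ((v - u : Fin k) : ℕ) = 1 →
      C.Adj (L[u.1]'(by rw [hlen]; exact u.2)) (L[v.1]'(by rw [hlen]; exact v.2)) := by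
    intro u v huv
    rw [Fin.val_sub] at huv
    have hu := u.2
    have hv := v.2
    rw [List.isChain_iff_getElem] at hc
    by_cases h1 : u.1 + 1 < k
    · have : v.1 = u.1 + 1 := by
        rcases lt_or_ge (k - u.1 + v.1) k with h | h
        · rw [Nat.mod_eq_of_lt h] at huv; omega
        · rw [Nat.mod_eq_sub_mod h, Nat.mod_eq_of_lt (by omega)] at huv; omega
      have := hc u.1 (by omega)
      simp_all
    · have h0 : v.1 = 0 := by
        rcases lt_or_ge (k - u.1 + v.1) k with h | h
        · rw [Nat.mod_eq_of_lt h] at huv; omega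
        · rw [Nat.mod_eq_sub_mod h, Nat.mod_eq_of_lt (by omega)] at huv; omega
      have h2 : u.1 = l.length := by omega
      have h3 := hlast (l[l.length-1]'(by omega)) (by
        rw [List.getLast?_eq_getElem?, List.getElem?_eq_getElem (by omega)]; rfl)
      have h4 : L[u.1]'(by rw [hlen]; exact u.2) = l[l.length-1]'(by omega) := by
        obtain ⟨m, hm⟩ : ∃ m, l.length = m + 1 := ⟨l.length - 1, by omega⟩
        simp [hL, h2, hm]
      have h5 : L[v.1]'(by rw [hlen]; exact v.2) = x := by simp [hL, h0]
      rw [h4, h5]; exact h3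
  refine ⟨⟨fun i => L[i.1]'(by rw [hlen]; exact i.2), ?_⟩, ?_⟩
  · intro a b hab
    rw [SimpleGraph.cycleGraph_adj'] at hab
    rcases hab with h | h
    · exact (key b a h).symm
    · exact key a b h
  · intro a b hab
    have := (List.Nodup.getElem_inj_iff hn).1 hab
    exact Fin.ext this

theorem clique_cyc {U : Type*} (C : SimpleGraph U) (k : ℕ) (T : Finset U) (hT : k ≤ T.card)
    (h : ∀ a ∈ T, ∀ b ∈ T, a ≠ b → C.Adj a b) : HasCopy (SimpleGraph.cycleGraph k) C := by
  obtain ⟨T', hT', hc⟩ := Finset.exists_subset_card_eq hT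
  let e := (Finset.equivFinOfCardEq hc).symm
  refine ⟨⟨fun i => (e i : U), ?_⟩, ?_⟩
  · intro a b hab
    refine h _ (hT' (e a).2) _ (hT' (e b).2) ?_
    intro h'
    exact hab.ne (e.injective (Subtype.ext h'))
  · intro a b hab
    exact e.injective (Subtype.ext hab)

theorem exists_not_mem_list {U : Type*} (A : Finset U) (l : List U) (h : l.length < A.card) :
    ∃ a ∈ A, a ∉ l := by
  by_contra hcon
  push Not at hcon
  have : A ⊆ l.toFinset := fun a ha => by simpa using hcon a ha
  have := (Finset.card_le_card this).trans (List.toFinset_card_le l)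
  omega

theorem alt_path {U : Type*} (C : SimpleGraph U) (k : ℕ) (A B : Finset U) (hAB : Disjoint A B)
    (hA : k ≤ A.card)
    (hcom : ∀ a ∈ A, ∀ b ∈ A, k ≤ (B.filter (fun z => C.Adj a z ∧ C.Adj b z)).card)
    (y y' : U) (hy' : y' ∈ A) (hyy : C.Adj y y') (j : ℕ) (hj : 2 * j + 2 ≤ k) :
    ∃ a ∈ A, ∃ l : List U, l.length = 2 * j + 1 ∧ (a :: l).Nodup ∧ (a :: l).IsChain C.Adj ∧
      (∀ z ∈ l.getLast?, z = y) ∧ ∀ z ∈ (a :: l), z = y ∨ z ∈ A ∨ z ∈ B := by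
  induction j with
  | zero =>
    refine ⟨y', hy', [y], by simp, ?_, ?_, by simp, ?_⟩
    · simp [hyy.ne']
    · simp [hyy.symm]
    · simp [hy']
  | succ j ih =>
    obtain ⟨a, ha, l, hl, hn, hc, hla, hm⟩ := ih (by omega)
    obtain ⟨a', ha', han⟩ := exists_not_mem_list A (a :: l) (by simp; omega)
    obtain ⟨b, hb, hbn⟩ := exists_not_mem_list _ (a :: l)
      (lt_of_lt_of_le (by simp; omega) (hcom a ha a' ha'))
    simp only [mem_filter] at hb
    have hba : b ≠ a' := by
      rintro rfl
      exact (Finset.disjoint_left.1 hAB ha') hb.1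
    refine ⟨a', ha', b :: a :: l, by simp; omega, ?_, ?_, ?_, ?_⟩
    · rw [List.nodup_cons, List.nodup_cons]
      refine ⟨?_, hbn, hn⟩
      rw [List.mem_cons]
      rintro (h | h)
      · exact hba h.symm
      · exact han h
    · rw [List.isChain_cons_cons, List.isChain_cons_cons]
      exact ⟨hb.2.2, hb.2.1.symm, hc⟩
    · intro z hz
      apply hla
      cases l with
      | nil => simp at hl
      | cons c l => simpa [List.getLast?_cons_cons] using hz
    · intro z hz
      rw [List.mem_cons, List.mem_cons] at hz
      rcases hz with rfl | rfl | hz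
      · exact Or.inr (Or.inl ha')
      · exact Or.inr (Or.inr hb.1)
      · exact hm z hz

/-- closing with an external vertex -/
theorem alt_cyc {U : Type*} (C : SimpleGraph U) (k : ℕ) (hk : 3 ≤ k) (hodd : Odd k)
    (A B : Finset U) (hAB : Disjoint A B) (hA : k ≤ A.card)
    (hcom : ∀ a ∈ A, ∀ b ∈ A, k ≤ (B.filter (fun z => C.Adj a z ∧ C.Adj b z)).card)
    (y y' : U) (hy' : y' ∈ A) (hyy : C.Adj y y')
    (hclose : ∀ a ∈ A, ∀ l : List U, l.length + 1 = k → (∀ z ∈ l, z = y ∨ z ∈ A ∨ z ∈ B) →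
      ∃ x, x ∉ l ∧ C.Adj x a ∧ C.Adj x y) : HasCopy (SimpleGraph.cycleGraph k) C := by
  obtain ⟨r, hr⟩ := hodd
  obtain ⟨j, rfl⟩ : ∃ j, r = j + 1 := ⟨r - 1, by omega⟩
  obtain ⟨a, ha, l, hl, hn, hc, hla, hm⟩ := alt_path C k A B hAB hA hcom y y' hy' hyy j (by omega)
  obtain ⟨x, hx, hxa, hxy⟩ := hclose a ha (a :: l) (by simp; omega) hm
  refine cyc_of_list C k hk x (a :: l) (by simp; omega) ?_ ?_ ?_
  · rw [List.nodup_cons]; exact ⟨hx, hn⟩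
  · rw [List.isChain_cons_cons]; exact ⟨hxa, hc⟩
  · intro z hz
    have : z = y := by
      apply hla
      cases l with
      | nil => simp at hl
      | cons c l => simpa [List.getLast?_cons_cons] using hz
    rw [this]; exact hxy.symm

/-- If all pairs of `A` have at least `k` common red neighbours in `B`, `A` is a blue clique. -/
theorem alt_clique {U : Type*} (C : SimpleGraph U) (k : ℕ) (hk : 3 ≤ k) (hodd : Odd k)
    (hno : ¬ HasCopy (SimpleGraph.cycleGraph k) C)
    (A B : Finset U) (hAB : Disjoint A B) (hA : k ≤ A.card)
    (hcom : ∀ a ∈ A, ∀ b ∈ A, k ≤ (B.filter (fun z => C.Adj a z ∧ C.Adj b z)).card) :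
    ∀ y ∈ A, ∀ y' ∈ A, ¬ C.Adj y y' := by
  intro y hy y' hy' hyy
  refine hno (alt_cyc C k hk hodd A B hAB hA hcom y y' hy' hyy ?_)
  intro a ha l hl hz
  obtain ⟨b, hb, hbn⟩ := exists_not_mem_list _ l
      (lt_of_lt_of_le (by omega) (hcom a ha y hy))
  simp only [mem_filter] at hb
  exact ⟨b, hbn, hb.2.1.symm, hb.2.2.symm⟩

theorem path_of_dg {U : Type*} (C : SimpleGraph U) (k : ℕ) (T : Finset U) (hT : T.Nonempty)
    (h : ∀ t ∈ T, k ≤ dg C T t) (j : ℕ) (hj : j ≤ k) :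
    ∃ a ∈ T, ∃ l : List U, l.length = j ∧ (a :: l).Nodup ∧ (a :: l).IsChain C.Adj ∧
      ∀ z ∈ a :: l, z ∈ T := by
  induction j with
  | zero =>
    obtain ⟨t, ht⟩ := hT
    exact ⟨t, ht, [], by simp, by simp, by simp, by simpa using ht⟩
  | succ j ih =>
    obtain ⟨a, ha, l, hl, hn, hc, hm⟩ := ih (by omega)
    obtain ⟨b, hb, hbn⟩ := exists_not_mem_list _ l (lt_of_lt_of_le (by omega) (h a ha))
    simp only [mem_filter] at hb
    refine ⟨b, hb.1, a :: l, by simp; omega, ?_, ?_, ?_⟩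
    · rw [List.nodup_cons, List.mem_cons]
      refine ⟨?_, hn⟩
      rintro (h | h)
      · exact hb.2.ne h.symm
      · exact hbn h
    · rw [List.isChain_cons_cons]; exact ⟨hb.2.symm, hc⟩
    · intro z hz
      rw [List.mem_cons] at hz
      rcases hz with rfl | hz
      · exact hb.1
      · exact hm z hz

/-- degeneracy of red neighbourhoods -/
theorem degen {U : Type*} (C : SimpleGraph U) (k : ℕ) (hk : 3 ≤ k)
    (hno : ¬ HasCopy (SimpleGraph.cycleGraph k) C) (x : U) (T : Finset U) (hT : T.Nonempty)
    (hx : ∀ t ∈ T, C.Adj x t) : ∃ t ∈ T, dg C T t < k := by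
  by_contra hcon
  push Not at hcon
  obtain ⟨a, ha, l, hl, hn, hc, hm⟩ := path_of_dg C k T hT hcon (k - 2) (by omega)
  refine hno (cyc_of_list C k hk x (a :: l) (by simp; omega) ?_ ?_ ?_)
  · rw [List.nodup_cons]
    exact ⟨fun h => (hx x (hm x h)).ne rfl, hn⟩
  · rw [List.isChain_cons_cons]; exact ⟨hx a ha, hc⟩
  · intro z hz
    exact (hx z (hm z (List.mem_of_mem_getLast? hz))).symm

theorem dg_insert {V : Type*} (H : SimpleGraph V) (T : Finset V) (b u : V) (hb : b ∉ T) :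
    dg H (insert b T) u = dg H T u + if H.Adj u b then 1 else 0 := by
  unfold dg
  rw [filter_insert]
  split_ifs with h
  · rw [card_insert_of_notMem (by simp [hb])]
  · simp

theorem dg_mono {V : Type*} (H : SimpleGraph V) {S T : Finset V} (h : S ⊆ T) (u : V) :
    dg H S u ≤ dg H T u := card_le_card (filter_subset_filter _ h)

theorem E2_insert {V : Type*} (H : SimpleGraph V) (T : Finset V) (b : V) (hb : b ∉ T) :
    E2 H (insert b T) = E2 H T + 2 * dg H T b := by
  unfold E2
  rw [sum_insert hb, dg_insert H T b b hb]
  simp only [SimpleGraph.irrefl, if_false, add_zero]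
  have : ∑ u ∈ T, dg H (insert b T) u = ∑ u ∈ T, dg H T u + dg H T b := by
    rw [sum_congr rfl (fun u _ => dg_insert H T b u hb), sum_add_distrib]
    congr 1
    unfold dg
    rw [card_filter]
    exact sum_congr rfl (fun u _ => by simp [H.adj_comm])
  rw [this]; ring

theorem E2_erase {V : Type*} (H : SimpleGraph V) (S : Finset V) (b : V) (hb : b ∈ S) :
    E2 H S = E2 H (S.erase b) + 2 * dg H S b := by
  have h := E2_insert H (S.erase b) b (by simp)
  rw [insert_erase hb] at h
  rw [h]
  congr 2
  have h2 := dg_insert H (S.erase b) b b (by simp)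
  rw [insert_erase hb] at h2
  simpa using h2.symm

theorem degen_sum {U : Type*} (C : SimpleGraph U) (k : ℕ) (hk : 3 ≤ k)
    (hno : ¬ HasCopy (SimpleGraph.cycleGraph k) C) (x : U) (Y : Finset U)
    (hx : ∀ t ∈ Y, C.Adj x t) : E2 C Y ≤ 2 * k * Y.card := by
  induction Y using Finset.strongInduction with
  | H Y ih =>
    rcases Y.eq_empty_or_nonempty with rfl | hne
    · simp [E2]
    · obtain ⟨t, ht, hlt⟩ := degen C k hk hno x Y hne hx
      have h1 := ih (Y.erase t) (erase_ssubset ht) (fun s hs => hx s (mem_of_mem_erase hs))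
      have h2 := E2_erase C Y t ht
      have h3 := card_erase_add_one ht
      rw [← h3]
      nlinarith

theorem high_card {U : Type*} (C : SimpleGraph U) (k Δ : ℕ) (hk : 3 ≤ k)
    (hno : ¬ HasCopy (SimpleGraph.cycleGraph k) C) (x : U) (Y : Finset U)
    (hx : ∀ t ∈ Y, C.Adj x t) :
    (Y.filter (fun y => ¬ dg C Y y ≤ Δ)).card * Δ ≤ 2 * k * Y.card := by
  refine le_trans ?_ (degen_sum C k hk hno x Y hx)
  unfold E2
  rw [← smul_eq_mul]
  refine le_trans (card_nsmul_le_sum _ (fun y => dg C Y y) Δ ?_)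
    (sum_le_sum_of_subset (filter_subset _ _))
  intro y hy
  have := (mem_filter.1 hy).2
  omega

theorem indep_set {U : Type*} (C : SimpleGraph U) (k : ℕ) (hk : 3 ≤ k)
    (hno : ¬ HasCopy (SimpleGraph.cycleGraph k) C) (x : U) (m : ℕ) :
    ∀ Y : Finset U, (∀ t ∈ Y, C.Adj x t) → k * m ≤ Y.card →
    ∃ T ⊆ Y, T.card = m ∧ ∀ a ∈ T, ∀ b ∈ T, ¬ C.Adj a b := by
  induction m with
  | zero => intro Y _ _; exact ⟨∅, by simp, by simp, by simp⟩
  | succ m ih =>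
    intro Y hx hY
    have hne : Y.Nonempty := by
      rw [← card_pos]; nlinarith
    obtain ⟨t, ht, hlt⟩ := degen C k hk hno x Y hne hx
    set Y' := (Y.filter (fun w => ¬ C.Adj t w)).erase t with hY'
    have hc : Y.card ≤ Y'.card + k := by
      have h1 := card_filter_add_card_filter_not (s := Y) (fun w => C.Adj t w)
      have h2 : Y'.card + 1 = (Y.filter (fun w => ¬ C.Adj t w)).card :=
        card_erase_add_one (by simp [ht])
      unfold dg at hlt
      omega
    obtain ⟨T, hTY, hTc, hT⟩ := ih Y' (fun s hs => hx s (by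
      simp only [hY', mem_erase, mem_filter] at hs; exact hs.2.1)) (by rw [mul_add] at hY; omega)
    have htT : t ∉ T := fun h => by simpa [hY'] using hTY h
    have hTt : ∀ b ∈ T, ¬ C.Adj t b := fun b hb => by
      have := hTY hb
      simp only [hY', mem_erase, mem_filter] at this
      exact this.2.2
    refine ⟨insert t T, ?_, ?_, ?_⟩
    · intro s hs
      rcases mem_insert.1 hs with rfl | hs
      · exact ht
      · have := hTY hs
        simp only [hY', mem_erase, mem_filter] at this
        exact this.2.1
    · rw [card_insert_of_notMem htT, hTc]
    · intro a ha b hb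
      rcases mem_insert.1 ha with ha' | ha' <;> rcases mem_insert.1 hb with hb' | hb'
      · rw [ha', hb']; exact C.irrefl
      · rw [ha']; exact hTt b hb'
      · rw [hb']; exact fun h => hTt a ha' h.symm
      · exact hT a ha' b hb'
end RamAux
namespace RamAux
open scoped Classical
open Finset

theorem ext_one {V U : Type*} (C : SimpleGraph U) (H : SimpleGraph V) (S : Finset V) (Z : Finset U)
    (f : V → U) (u : V) (hu : u ∉ S) (hf : Emb C H S Z f) (z : U) (hz : z ∈ Z)
    (hzn : z ∉ S.image f) (hza : ∀ w ∈ S, H.Adj u w → ¬ C.Adj z (f w)) :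
    Emb C H (insert u S) Z (Function.update f u z) := by
  obtain ⟨h1, h2, h3⟩ := hf
  have hne : ∀ w ∈ S, w ≠ u := fun w hw h => hu (h ▸ hw)
  have hup : ∀ w ∈ S, Function.update f u z w = f w := fun w hw =>
    Function.update_of_ne (hne w hw) _ _
  have hzn' : ∀ w ∈ S, f w ≠ z := fun w hw h => hzn (mem_image.2 ⟨w, hw, h⟩)
  refine ⟨?_, ?_, ?_⟩
  · intro a ha b hb hab
    rcases mem_insert.1 ha with ha' | ha' <;> rcases mem_insert.1 hb with hb' | hb'
    · rw [ha', hb']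
    · rw [ha', hup b hb', Function.update_self] at hab
      exact absurd hab.symm (hzn' b hb')
    · rw [hb', hup a ha', Function.update_self] at hab
      exact absurd hab (hzn' a ha')
    · rw [hup a ha', hup b hb'] at hab
      exact h1 a ha' b hb' hab
  · intro a ha
    rcases mem_insert.1 ha with ha' | ha'
    · rw [ha', Function.update_self]; exact hz
    · rw [hup a ha']; exact h2 a ha'
  · intro a ha b hb hab
    rcases mem_insert.1 ha with ha' | ha' <;> rcases mem_insert.1 hb with hb' | hb'
    · rw [ha', hb'] at hab; exact absurd hab H.irrefl
    · rw [ha', hup b hb', Function.update_self]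
      exact hza b hb' (ha' ▸ hab)
    · rw [hb', hup a ha', Function.update_self]
      exact fun h => hza a ha' (hb' ▸ hab.symm) h.symm
    · rw [hup a ha', hup b hb']
      exact h3 a ha' b hb' hab

theorem Emb.mono {V U : Type*} {C : SimpleGraph U} {H : SimpleGraph V} {S : Finset V}
    {Z Z' : Finset U} {f : V → U} (hf : Emb C H S Z f) (h : Z ⊆ Z') : Emb C H S Z' f :=
  ⟨hf.1, fun u hu => h (hf.2.1 u hu), hf.2.2⟩

theorem emb_clique {V U : Type*} [Nonempty U] (C : SimpleGraph U) (H : SimpleGraph V) (S : Finset V)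
    (Z : Finset U) (hZ : ∀ a ∈ Z, ∀ b ∈ Z, ¬ C.Adj a b) (hc : S.card ≤ Z.card) :
    ∃ f, Emb C H S Z f := by
  obtain ⟨e⟩ : Nonempty (S ↪ Z) := Function.Embedding.nonempty_of_card_le (by simpa using hc)
  refine ⟨fun u => if h : u ∈ S then (e ⟨u, h⟩ : U) else Classical.arbitrary U, ?_, ?_, ?_⟩
  · intro a ha b hb hab
    simp only [ha, hb, dif_pos] at hab
    simpa using e.injective (Subtype.ext hab)
  · intro a ha
    simp [ha]
  · intro a ha b hb _
    simp only [ha, hb, dif_pos]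
    exact hZ _ (e _).2 _ (e _).2

theorem hereditary {V : Type*} (H : SimpleGraph V) (S : Finset V) (ℓ : ℕ) (hc : CutConn H S)
    (hE : E2 H S ≤ 2 * S.card + 2 * ℓ) :
    ∀ (m : ℕ) (T : Finset V), T ⊆ S → (S \ T).card = m → E2 H T ≤ 2 * T.card + 2 * ℓ := by
  intro m
  induction m with
  | zero =>
    intro T hT h0
    have : S ⊆ T := by rw [card_eq_zero, sdiff_eq_empty_iff_subset] at h0; exact h0
    rw [Subset.antisymm hT this]; exact hE
  | succ m ih =>
    intro T hT hm
    rcases T.eq_empty_or_nonempty with rfl | hne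
    · simp [E2]
    · obtain ⟨u, hu, w, hw, hwT, ha⟩ := hc T hT hne (by rintro rfl; simp at hm)
      have h1 := ih (insert w T) (insert_subset hw hT) (by
        rw [sdiff_insert, card_erase_of_mem (by simp [hw, hwT]), hm]; rfl)
      rw [E2_insert H T w hwT, card_insert_of_notMem hwT] at h1
      have : 0 < dg H T w := card_pos.2 ⟨u, by simp [hu, ha.symm]⟩
      omega

theorem step_emb {V U : Type*} (C : SimpleGraph U) (H : SimpleGraph V) (S : Finset V)
    (Z : Finset U) (Δ : ℕ) (hΔ : ∀ z ∈ Z, dg C Z z ≤ Δ) (u : V) (hu : u ∈ S)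
    (f : V → U) (hf : Emb C H (S.erase u) Z f) (hc : S.card + dg H S u * Δ ≤ Z.card) :
    ∃ f, Emb C H S Z f := by
  have hb : ((S.erase u).image f ∪
      (S.filter (fun w => H.Adj u w)).biUnion (fun w => Z.filter (fun z => C.Adj (f w) z))).card
      < Z.card := by
    refine lt_of_le_of_lt (card_union_le _ _) ?_
    have h1 : ((S.erase u).image f).card ≤ S.card - 1 := by
      refine card_image_le.trans ?_
      rw [card_erase_of_mem hu]
    have h2 : ((S.filter (fun w => H.Adj u w)).biUnion
        (fun w => Z.filter (fun z => C.Adj (f w) z))).card ≤ dg H S u * Δ := by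
      refine card_biUnion_le_card_mul _ _ _ ?_
      intro w hw
      simp only [mem_filter] at hw
      exact hΔ _ (hf.2.1 w (mem_erase.2 ⟨hw.2.ne', hw.1⟩))
    have : 0 < S.card := card_pos.2 ⟨u, hu⟩
    omega
  obtain ⟨z, hz, hzn⟩ := exists_mem_notMem_of_card_lt_card hb
  simp only [mem_union, not_or, mem_biUnion, mem_filter, not_exists, not_and] at hzn
  have := ext_one C H (S.erase u) Z f u (by simp) hf z hz hzn.1 (fun w hw ha hadj =>
    hzn.2 w ⟨mem_of_mem_erase hw, ha⟩ hz hadj.symm)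
  rw [insert_erase hu] at this
  exact ⟨_, this⟩

theorem min_deg {V : Type*} (H : SimpleGraph V) (S : Finset V) (ℓ : ℕ) (hne : S.Nonempty)
    (hE : E2 H S ≤ 2 * S.card + 2 * ℓ) :
    ∃ u ∈ S, dg H S u ≤ 2 ∨
      (3 ≤ dg H S u ∧ dg H S u * S.card ≤ 6 * ℓ ∧ dg H S u + 1 ≤ S.card) := by
  obtain ⟨u, hu, hmin⟩ := exists_min_image S (dg H S) hne
  refine ⟨u, hu, ?_⟩
  by_cases h : dg H S u ≤ 2
  · exact Or.inl h
  · refine Or.inr ⟨by omega, ?_, ?_⟩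
    · have h1 : S.card * dg H S u ≤ E2 H S := by
        unfold E2
        rw [← smul_eq_mul]
        exact card_nsmul_le_sum _ _ _ hmin
      obtain ⟨e, he⟩ : ∃ e, dg H S u = e + 3 := ⟨dg H S u - 3, by omega⟩
      rw [he] at h1 ⊢
      nlinarith
    · have : S.filter (fun w => H.Adj u w) ⊆ S.erase u := by
        intro w hw
        simp only [mem_filter] at hw
        exact mem_erase.2 ⟨hw.2.ne', hw.1⟩
      have := card_le_card this
      rw [card_erase_of_mem hu] at this
      have h0 : 0 < S.card := card_pos.2 ⟨u, hu⟩
      unfold dg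
      omega

theorem greedy {V U : Type*} [Nonempty U] (C : SimpleGraph U) (H : SimpleGraph V)
    (Z : Finset U) (Δ ℓ : ℕ) (hΔ : ∀ z ∈ Z, dg C Z z ≤ Δ)
    (h3 : ∀ d m : ℕ, 3 ≤ d → d * m ≤ 6 * ℓ → d + 1 ≤ m → m + d * Δ ≤ Z.card) (S : Finset V)
    (hE : ∀ T, T ⊆ S → E2 H T ≤ 2 * T.card + 2 * ℓ) (h2 : S.card + 2 * Δ ≤ Z.card) :
    ∃ f, Emb C H S Z f := by
  induction S using Finset.strongInduction with
  | H S ih =>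
    rcases S.eq_empty_or_nonempty with rfl | hne
    · exact ⟨fun _ => Classical.arbitrary U, by simp, by simp, by simp⟩
    · obtain ⟨u, hu, hd⟩ := min_deg H S ℓ hne (hE S (Subset.refl _))
      have hcc := card_erase_add_one hu
      obtain ⟨f, hf⟩ := ih (S.erase u) (erase_ssubset hu)
        (fun T hT => hE T (hT.trans (erase_subset _ _))) (by omega)
      refine step_emb C H S Z Δ hΔ u hu f hf ?_
      rcases hd with hd | ⟨ha, hb, hc⟩
      · have := Nat.mul_le_mul_right Δ hd
        omega
      · exact h3 _ _ ha hb hc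

theorem base {V U : Type*} [Fintype U] [Nonempty U] (C : SimpleGraph U) (H : SimpleGraph V)
    (k ℓ : ℕ) (hk : 3 ≤ k) (hno : ¬ HasCopy (SimpleGraph.cycleGraph k) C)
    (h3 : (6 * k + 2) * ℓ ≤ Fintype.card U) (S : Finset V)
    (hE : ∀ T, T ⊆ S → E2 H T ≤ 2 * T.card + 2 * ℓ) (h2 : (2 * k + 1) * S.card ≤ Fintype.card U) :
    ∃ f, Emb C H S univ f := by
  induction S using Finset.strongInduction with
  | H S ih =>
    rcases S.eq_empty_or_nonempty with rfl | hne
    · exact ⟨fun _ => Classical.arbitrary U, by simp, by simp, by simp⟩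
    · by_cases hbig : ∃ x, k * S.card ≤ dg C univ x
      · obtain ⟨x, hx⟩ := hbig
        obtain ⟨T, hT, hTc, hTi⟩ := indep_set C k hk hno x S.card _
          (fun t ht => (mem_filter.1 ht).2) hx
        obtain ⟨f, hf⟩ := emb_clique C H S T hTi (by omega)
        exact ⟨f, hf.mono (subset_univ _)⟩
      push Not at hbig
      obtain ⟨u, hu, hd⟩ := min_deg H S ℓ hne (hE S (Subset.refl _))
      have hcc := card_erase_add_one hu
      obtain ⟨f, hf⟩ := ih (S.erase u) (erase_ssubset hu)
        (fun T hT => hE T (hT.trans (erase_subset _ _)))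
        (le_trans (Nat.mul_le_mul_left _ (by omega)) h2)
      refine step_emb C H S univ (k * S.card) (fun z _ => (hbig z).le) u hu f hf ?_
      rw [card_univ]
      rcases hd with hd | ⟨ha, hb, hc⟩
      · have := Nat.mul_le_mul_right (k * S.card) hd
        nlinarith
      · have h4 : S.card ≤ 2 * ℓ := by nlinarith
        have h5 : dg H S u * (k * S.card) = k * (dg H S u * S.card) := by ring
        have h6 := Nat.mul_le_mul_left k hb
        rw [h5]
        nlinarith

/-- attach leaves -/
theorem leaf_ext {V U : Type*} [Fintype U] (C : SimpleGraph U) (H : SimpleGraph V) (S : Finset V)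
    (f : V → U) (hf : Emb C H S univ f) (p : V → V) (m : ℕ) (M : Finset V) (hd : Disjoint S M)
    (hp : ∀ u ∈ M, p u ∈ S) (hadj : ∀ u ∈ M, ∀ w, w ∈ S ∨ w ∈ M → H.Adj u w → w = p u)
    (hm : S.card + M.card ≤ m)
    (hdeg : ∀ u ∈ M, m + dg C univ (f (p u)) ≤ Fintype.card U) :
    ∃ g, Emb C H (S ∪ M) univ g ∧ ∀ s ∈ S, g s = f s := by
  induction M using Finset.induction_on with
  | empty => exact ⟨f, by simpa using hf, fun _ _ => rfl⟩
  | insert u M hu ih =>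
    rw [card_insert_of_notMem hu] at hm
    rw [disjoint_insert_right] at hd
    obtain ⟨g, hg, hgf⟩ := ih hd.2 (fun w hw => hp w (mem_insert_of_mem hw))
      (fun w hw v hv => hadj w (mem_insert_of_mem hw) v (hv.imp id mem_insert_of_mem)) (by omega)
      (fun w hw => hdeg w (mem_insert_of_mem hw))
    have hps := hp u (mem_insert_self _ _)
    have hcard : ((S ∪ M).image g ∪ univ.filter (fun z => C.Adj (f (p u)) z)).card
        < (univ : Finset U).card := by
      refine lt_of_le_of_lt (card_union_le _ _) ?_
      have h1 : ((S ∪ M).image g).card ≤ S.card + M.card :=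
        card_image_le.trans (card_union_le _ _)
      have h2 := hdeg u (mem_insert_self _ _)
      unfold dg at h2
      rw [card_univ]
      omega
    obtain ⟨z, hz, hzn⟩ := exists_mem_notMem_of_card_lt_card hcard
    simp only [mem_union, not_or, mem_filter, mem_univ, true_and] at hzn
    have huS : u ∉ S ∪ M := by simp [hd.1, hu]
    have := ext_one C H (S ∪ M) univ g u huS hg z hz hzn.1 (fun w hw ha hc => by
      have hw' := hadj u (mem_insert_self _ _) w
        ((mem_union.1 hw).imp id mem_insert_of_mem) ha
      rw [hw', hgf _ hps] at hc
      exact hzn.2 hc.symm)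
    refine ⟨_, by rw [union_insert]; exact this, ?_⟩
    intro s hs
    have hsu : s ≠ u := by
      rintro rfl
      exact hd.1 hs
    rw [Function.update_of_ne hsu, hgf s hs]
end RamAux
namespace RamAux
open scoped Classical
open Finset

theorem two_nbrs {V : Type*} (H : SimpleGraph V) (S : Finset V) (u a b w : V)
    (hd : dg H S u = 2) (ha : a ∈ S) (hb : b ∈ S) (hw : w ∈ S) (hab : a ≠ b)
    (hua : H.Adj u a) (hub : H.Adj u b) (huw : H.Adj u w) : w = a ∨ w = b := by
  have h1 : ({a, b} : Finset V) ⊆ S.filter (fun w => H.Adj u w) := by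
    intro x hx
    simp only [mem_insert, mem_singleton] at hx
    rcases hx with rfl | rfl <;> simp [*]
  have h2 : ({a, b} : Finset V) = S.filter (fun w => H.Adj u w) :=
    eq_of_subset_of_card_le h1 (by rw [card_pair hab]; exact hd.le)
  have h3 : w ∈ ({a, b} : Finset V) := by rw [h2]; simp [hw, huw]
  simpa using h3

theorem comp_exists {V : Type*} (H : SimpleGraph V) (S B T : Finset V) (q : ℕ)
    (hB : ∀ u ∈ B, u ∈ S ∧ dg H S u = 2)
    (hq : ∀ l : List V, l.Nodup → l.IsChain H.Adj → (∀ u ∈ l, u ∈ B) → l.length ≤ q)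
    (hTB : T ⊆ B) (hne : T.Nonempty) (hcl : ∀ u ∈ T, ∀ w ∈ B, H.Adj u w → w ∈ T) :
    ∃ P, P ⊆ T ∧ P.Nonempty ∧ P.card ≤ q ∧ ∀ u ∈ P, ∀ w ∈ B, H.Adj u w → w ∈ P := by
  by_contra hcon
  have key : ∀ j : ℕ, ∃ l : List V, l.length = j + 1 ∧ l.Nodup ∧ l.IsChain H.Adj ∧
      ∀ u ∈ l, u ∈ T := by
    intro j
    induction j with
    | zero =>
      obtain ⟨t, ht⟩ := hne
      exact ⟨[t], by simp, by simp, by simp, by simpa using ht⟩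
    | succ j ih =>
      obtain ⟨l, hl, hn, hc, hm⟩ := ih
      have h1 : ∃ u ∈ l, ∃ w ∈ B, H.Adj u w ∧ w ∉ l := by
        by_contra h
        push Not at h
        refine hcon ⟨l.toFinset, ?_, ?_, ?_, ?_⟩
        · intro x hx; exact hm x (by simpa using hx)
        · rw [← card_pos, List.toFinset_card_of_nodup hn]; omega
        · exact (List.toFinset_card_le l).trans (hq l hn hc (fun u hu => hTB (hm u hu)))
        · intro u hu w hw ha
          simpa using h u (by simpa using hu) w hw ha
      obtain ⟨u, hu, w, hw, ha, hwl⟩ := h1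
      have hwT : w ∈ T := hcl u (hm u hu) w hw ha
      obtain ⟨s, t, rfl⟩ := List.append_of_mem hu
      rcases List.eq_nil_or_concat s with rfl | ⟨s', a, rfl⟩
      · refine ⟨w :: u :: t, by simpa using hl, ?_, ?_, ?_⟩
        · rw [List.nodup_cons]; exact ⟨by simpa using hwl, by simpa using hn⟩
        · rw [List.isChain_cons_cons]; exact ⟨ha.symm, by simpa using hc⟩
        · intro x hx
          rcases List.mem_cons.1 hx with rfl | hx
          · exact hwT
          · exact hm x (by simpa using hx)
      · rcases t with _ | ⟨b, t⟩
        · refine ⟨(s' ++ [a]) ++ [u] ++ [w], ?_, ?_, ?_, ?_⟩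
          · simp at hl ⊢; omega
          · simp only [List.concat_eq_append] at hn hwl
            rw [List.nodup_append]
            refine ⟨hn, by simp, ?_⟩
            intro x hx y hy
            simp only [List.mem_singleton] at hy
            subst hy
            rintro rfl
            exact hwl hx
          · simp only [List.concat_eq_append] at hc
            rw [List.isChain_append]
            refine ⟨hc, by simp, ?_⟩
            intro x hx y hy
            simp at hx hy
            subst hx; subst hy; exact ha
          · intro x hx
            rw [List.mem_append] at hx
            rcases hx with hx | hx
            · exact hm x (by simpa [or_assoc] using hx)
            · simp at hx; rw [hx]; exact hwT
        · exfalso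
          have hua : H.Adj u a := by
            rw [List.isChain_append] at hc
            exact (hc.2.2 a (by simp) u (by simp)).symm
          have hub : H.Adj u b := by
            rw [List.isChain_append, List.isChain_cons_cons] at hc
            exact hc.2.1.1
          have hab : a ≠ b := by
            rw [List.nodup_append] at hn
            exact hn.2.2 a (by simp) b (by simp)
          have haB := hB a (hTB (hm a (by simp)))
          have hbB := hB b (hTB (hm b (by simp)))
          have huB := hB u (hTB (hm u (by simp)))
          rcases two_nbrs H S u a b w huB.2 haB.1 hbB.1 (hB w hw).1 hab hua hub ha with h | h
          · exact hwl (by simp [h])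
          · exact hwl (by simp [h])
  obtain ⟨l, hl, hn, hc, hm⟩ := key q
  have := hq l hn hc (fun u hu => hTB (hm u hu))
  omega

theorem comp_count {V : Type*} (H : SimpleGraph V) (S B : Finset V) (q : ℕ)
    (hB : ∀ u ∈ B, u ∈ S ∧ dg H S u = 2) (hconn : CutConn H S) (hqS : q < S.card)
    (hq : ∀ l : List V, l.Nodup → l.IsChain H.Adj → (∀ u ∈ l, u ∈ B) → l.length ≤ q)
    (T : Finset V) (hTB : T ⊆ B) (hcl : ∀ u ∈ T, ∀ w ∈ B, H.Adj u w → w ∈ T) :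
    T.card ≤ q * ∑ u ∈ T, dg H (S \ B) u := by
  induction T using Finset.strongInduction with
  | H T ih =>
    rcases T.eq_empty_or_nonempty with rfl | hne
    · simp
    obtain ⟨P, hPT, hPne, hPq, hPcl⟩ := comp_exists H S B T q hB hq hTB hne hcl
    have h1 := ih (T \ P) (sdiff_ssubset hPT hPne) (sdiff_subset.trans hTB) (by
      intro u hu w hw ha
      rw [mem_sdiff] at hu ⊢
      refine ⟨hcl u hu.1 w hw ha, fun hwP => hu.2 ?_⟩
      exact hPcl w hwP u (hTB hu.1) ha.symm)
    obtain ⟨u, hu, w, hw, hwP, ha⟩ := hconn P (fun x hx => (hB x (hTB (hPT hx))).1) hPne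
      (by rintro rfl; omega)
    have h2 : 1 ≤ ∑ u ∈ P, dg H (S \ B) u := by
      refine le_trans ?_ (single_le_sum (fun _ _ => Nat.zero_le _) hu)
      refine card_pos.2 ⟨w, ?_⟩
      simp only [mem_filter, mem_sdiff]
      exact ⟨⟨hw, fun hwB => hwP (hPcl u hu w hwB ha)⟩, ha⟩
    rw [← sum_sdiff hPT, ← card_sdiff_add_card_eq_card hPT]
    nlinarith

theorem leaf_count {V : Type*} (H : SimpleGraph V) (S : Finset V) (q ℓ : ℕ)
    (hconn : CutConn H S) (hqS : q < S.card) (hpos : ∀ u ∈ S, 1 ≤ dg H S u)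
    (hE : E2 H S ≤ 2 * S.card + 2 * ℓ)
    (hq : ∀ l : List V, l.Nodup → l.IsChain H.Adj → (∀ u ∈ l, u ∈ S ∧ dg H S u = 2) →
      l.length ≤ q) :
    S.card ≤ (4 * q + 2) * (S.filter (fun u => dg H S u = 1)).card + (6 * q + 2) * ℓ := by
  set B := S.filter (fun u => dg H S u = 2) with hBdef
  set L := S.filter (fun u => dg H S u = 1) with hLdef
  set A := S.filter (fun u => 3 ≤ dg H S u) with hAdef
  have h1 := comp_count H S B q (fun u hu => mem_filter.1 hu) hconn hqS
    (fun l a b c => hq l a b (fun u hu => mem_filter.1 (c u hu))) B (Subset.refl _)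
    (fun _ _ w hw _ => hw)
  have h2 : ∑ u ∈ B, dg H (S \ B) u = ∑ w ∈ S \ B, dg H B w := by
    have := sum_card_bipartiteAbove_eq_sum_card_bipartiteBelow (s := B) (t := S \ B)
      (fun a b => H.Adj a b)
    unfold dg
    simp only [bipartiteAbove, bipartiteBelow] at this
    rw [this]
    refine sum_congr rfl (fun w _ => ?_)
    congr 1
    ext x; simp [H.adj_comm]
  have hSB : S \ B = A ∪ L := by
    ext u
    simp only [hBdef, hAdef, hLdef, mem_sdiff, mem_union, mem_filter]
    constructor
    · rintro ⟨h, h'⟩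
      have := hpos u h
      have : dg H S u ≠ 2 := fun e => h' ⟨h, e⟩
      rcases Nat.lt_or_ge (dg H S u) 3 with h4 | h4
      · right; exact ⟨h, by omega⟩
      · left; exact ⟨h, h4⟩
    · rintro (⟨h, h'⟩ | ⟨h, h'⟩)
      · exact ⟨h, fun e => by omega⟩
      · exact ⟨h, fun e => by omega⟩
  have hAL : Disjoint A L := by
    rw [Finset.disjoint_left]
    intro u hu hu'
    simp only [hAdef, hLdef, mem_filter] at hu hu'
    omega
  have hBS : B ⊆ S := filter_subset _ _
  have h3 : ∑ w ∈ S \ B, dg H B w ≤ ∑ w ∈ A, dg H S w + L.card := by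
    refine (sum_le_sum (fun w _ => dg_mono H hBS w)).trans ?_
    rw [hSB, sum_union hAL]
    have : ∑ w ∈ L, dg H S w = L.card := by
      rw [card_eq_sum_ones]
      exact sum_congr rfl (fun w hw => (mem_filter.1 hw).2)
    omega
  have h4 : E2 H S = ∑ w ∈ A, dg H S w + L.card + 2 * B.card := by
    unfold E2
    rw [← sum_sdiff hBS, hSB, sum_union hAL]
    have e1 : ∑ w ∈ L, dg H S w = L.card := by
      rw [card_eq_sum_ones]
      exact sum_congr rfl (fun w hw => (mem_filter.1 hw).2)
    have e2 : ∑ w ∈ B, dg H S w = 2 * B.card := by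
      rw [sum_congr rfl (fun w hw => (mem_filter.1 hw).2), sum_const, smul_eq_mul, mul_comm]
    omega
  have h5 : 3 * A.card ≤ ∑ w ∈ A, dg H S w := by
    rw [mul_comm, ← smul_eq_mul]
    exact card_nsmul_le_sum _ _ _ (fun w hw => (mem_filter.1 hw).2)
  have h6 : S.card = A.card + L.card + B.card := by
    rw [← card_sdiff_add_card_eq_card hBS, hSB, card_union_of_disjoint hAL]
  have h7 : ∑ u ∈ B, dg H (S \ B) u ≤ 4 * L.card + 6 * ℓ := by omega
  have h8 : B.card ≤ q * (4 * L.card + 6 * ℓ) := h1.trans (Nat.mul_le_mul_left _ h7)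
  have h9 : A.card ≤ L.card + 2 * ℓ := by omega
  nlinarith
end RamAux
namespace RamAux
open scoped Classical
open Finset

theorem replace_path {V U : Type*} [Fintype U] (C : SimpleGraph U) (H : SimpleGraph V)
    (S : Finset V) (hconn : CutConn H S) (m : ℕ) (hm : 2 ≤ m) (hS : m + 1 < S.card) (p : ℕ → V)
    (hpS : ∀ i ≤ m, p i ∈ S) (hpd : ∀ i ≤ m, dg H S (p i) = 2)
    (hpi : ∀ i ≤ m, ∀ j ≤ m, p i = p j → i = j) (hpa : ∀ i < m, H.Adj (p i) (p (i + 1)))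
    (f : V → U) (P : Finset V) (hP : P = (range (m + 1)).image p)
    (hfi : ∀ u ∈ S, u ∉ P → ∀ w ∈ S, w ∉ P → f u = f w → u = w)
    (hfa : ∀ u ∈ S, u ∉ P → ∀ w ∈ S, w ∉ P → H.Adj u w → ¬ C.Adj (f u) (f w))
    (z : ℕ → U) (hzi : ∀ i ≤ m, ∀ j ≤ m, z i = z j → i = j)
    (hzf : ∀ i ≤ m, ∀ u ∈ S, u ∉ P → z i ≠ f u)
    (hza : ∀ i < m, ¬ C.Adj (z i) (z (i + 1)))
    (hz0 : ∀ u ∈ S, u ∉ P → H.Adj (p 0) u → ¬ C.Adj (z 0) (f u))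
    (hzm : ∀ u ∈ S, u ∉ P → H.Adj (p m) u → ¬ C.Adj (z m) (f u)) :
    ∃ g, Emb C H S univ g := by
  have hPm : ∀ u, u ∈ P ↔ ∃ i ≤ m, p i = u := by
    intro u
    rw [hP, mem_image]
    constructor
    · rintro ⟨i, hi, h⟩; exact ⟨i, by simpa [Nat.lt_succ_iff] using hi, h⟩
    · rintro ⟨i, hi, h⟩; exact ⟨i, by simpa [Nat.lt_succ_iff] using hi, h⟩
  have hint : ∀ i, 0 < i → i < m → ∀ w ∈ S, H.Adj (p i) w → w = p (i - 1) ∨ w = p (i + 1) := by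
    intro i h0 h1 w hw ha
    refine two_nbrs H S (p i) _ _ w (hpd i h1.le) (hpS _ (by omega)) (hpS _ (by omega)) hw ?_ ?_
      (hpa i h1) ha
    · intro h; have := hpi _ (by omega) _ (by omega) h; omega
    · have := hpa (i - 1) (by omega)
      rw [Nat.sub_add_cancel (by omega)] at this
      exact this.symm
  have h0m : ¬ H.Adj (p 0) (p m) := by
    intro h
    have hPS : P ⊆ S := by
      intro u hu
      obtain ⟨i, hi, rfl⟩ := (hPm u).1 hu
      exact hpS i hi
    have hPc : P.card ≤ m + 1 := by rw [hP]; exact card_image_le.trans (by simp)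
    obtain ⟨u, hu, w, hw, hwP, ha⟩ := hconn P hPS ⟨p 0, (hPm _).2 ⟨0, by omega, rfl⟩⟩
      (by intro h; rw [h] at hPc; omega)
    obtain ⟨i, hi, rfl⟩ := (hPm u).1 hu
    apply hwP
    rw [hPm]
    rcases Nat.eq_zero_or_pos i with rfl | h0
    · rcases two_nbrs H S (p 0) (p 1) (p m) w (hpd 0 hi) (hpS _ (by omega)) (hpS _ (by omega)) hw
        (by intro h; have := hpi _ (by omega) _ (by omega) h; omega) (hpa 0 (by omega)) h ha
        with e | e
      · exact ⟨1, by omega, e.symm⟩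
      · exact ⟨m, by omega, e.symm⟩
    · rcases Nat.lt_or_ge i m with h1 | h1
      · rcases hint i h0 h1 w hw ha with e | e
        · exact ⟨i - 1, by omega, e.symm⟩
        · exact ⟨i + 1, by omega, e.symm⟩
      · obtain rfl : i = m := by omega
        have h2 := hpa (i - 1) (by omega)
        rw [Nat.sub_add_cancel (by omega)] at h2
        rcases two_nbrs H S (p i) (p 0) (p (i - 1)) w (hpd i hi) (hpS _ (by omega))
          (hpS _ (by omega)) hw
          (by intro h; have := hpi _ (by omega) _ (by omega) h; omega) h.symm h2.symm ha
          with e | e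
        · exact ⟨0, by omega, e.symm⟩
        · exact ⟨i - 1, by omega, e.symm⟩
  have hcons : ∀ i j, i < j → j ≤ m → H.Adj (p i) (p j) → j = i + 1 := by
    intro i j hij hj ha
    rcases Nat.eq_zero_or_pos i with rfl | h0
    · rcases Nat.lt_or_ge j m with h1 | h1
      · rcases hint j hij h1 (p 0) (hpS _ (by omega)) ha.symm with e | e
        · have := hpi _ (by omega) _ (by omega) e; omega
        · have := hpi _ (by omega) _ (by omega) e; omega
      · obtain rfl : j = m := by omega
        exact absurd ha h0m
    · rcases hint i h0 (by omega) (p j) (hpS _ hj) ha with e | e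
      · have := hpi _ (by omega) _ (by omega) e; omega
      · exact hpi _ (by omega) _ (by omega) e
  have hout : ∀ i ≤ m, ∀ u ∈ S, u ∉ P → H.Adj (p i) u → i = 0 ∨ i = m := by
    intro i hi u hu huP ha
    by_contra hcon
    push Not at hcon
    rcases hint i (by omega) (by omega) u hu ha with e | e
    · exact huP ((hPm u).2 ⟨_, by omega, e.symm⟩)
    · exact huP ((hPm u).2 ⟨_, by omega, e.symm⟩)
  obtain ⟨g, hgp, hgf⟩ : ∃ g : V → U, (∀ i ≤ m, g (p i) = z i) ∧ ∀ u, u ∉ P → g u = f u := by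
    refine ⟨fun u => if h : ∃ i ≤ m, p i = u then z h.choose else f u, ?_, ?_⟩
    · intro i hi
      have h : ∃ j ≤ m, p j = p i := ⟨i, hi, rfl⟩
      simp only [dif_pos h]
      rw [hpi _ h.choose_spec.1 _ hi h.choose_spec.2]
    · intro u hu
      rw [hPm] at hu
      simp only [dif_neg hu]
  have hoa : ∀ i ≤ m, ∀ u ∈ S, u ∉ P → H.Adj (p i) u → ¬ C.Adj (z i) (f u) := by
    intro i hi u hu huP ha
    rcases hout i hi u hu huP ha with rfl | rfl
    · exact hz0 u hu huP ha
    · exact hzm u hu huP ha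
  refine ⟨g, ?_, fun _ _ => mem_univ _, ?_⟩
  · intro u hu w hw huw
    by_cases h1 : u ∈ P <;> by_cases h2 : w ∈ P
    · obtain ⟨i, hi, rfl⟩ := (hPm u).1 h1
      obtain ⟨j, hj, rfl⟩ := (hPm w).1 h2
      rw [hgp i hi, hgp j hj] at huw
      rw [hzi i hi j hj huw]
    · obtain ⟨i, hi, rfl⟩ := (hPm u).1 h1
      rw [hgp i hi, hgf w h2] at huw
      exact absurd huw (hzf i hi w hw h2)
    · obtain ⟨i, hi, rfl⟩ := (hPm w).1 h2
      rw [hgp i hi, hgf u h1] at huw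
      exact absurd huw.symm (hzf i hi u hu h1)
    · rw [hgf u h1, hgf w h2] at huw
      exact hfi u hu h1 w hw h2 huw
  · intro u hu w hw ha
    by_cases h1 : u ∈ P <;> by_cases h2 : w ∈ P
    · obtain ⟨i, hi, rfl⟩ := (hPm u).1 h1
      obtain ⟨j, hj, rfl⟩ := (hPm w).1 h2
      rw [hgp i hi, hgp j hj]
      rcases lt_trichotomy i j with h | h | h
      · have := hcons i j h hj ha
        subst this
        exact hza i (by omega)
      · subst h; exact absurd ha H.irrefl
      · have := hcons j i h hi ha.symm
        subst this
        exact fun h => hza j (by omega) h.symm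
    · obtain ⟨i, hi, rfl⟩ := (hPm u).1 h1
      rw [hgp i hi, hgf w h2]
      exact hoa i hi w hw h2 ha
    · obtain ⟨i, hi, rfl⟩ := (hPm w).1 h2
      rw [hgp i hi, hgf u h1]
      exact fun h => hoa i hi u hu h1 ha.symm h.symm
    · rw [hgf u h1, hgf w h2]
      exact hfa u hu h1 w hw h2 ha

theorem path_step {V U : Type*} [Fintype U] [Nonempty U] (C : SimpleGraph U) (H : SimpleGraph V)
    (k : ℕ) (hk : 3 ≤ k) (hodd : Odd k) (hno : ¬ HasCopy (SimpleGraph.cycleGraph k) C)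
    (S : Finset V) (hconn : CutConn H S) (hN : 2 * S.card ≤ Fintype.card U + 1)
    (m : ℕ) (hm : m = 3 * k) (hS : m + 1 < S.card) (p : ℕ → V)
    (hpS : ∀ i ≤ m, p i ∈ S) (hpd : ∀ i ≤ m, dg H S (p i) = 2)
    (hpi : ∀ i ≤ m, ∀ j ≤ m, p i = p j → i = j) (hpa : ∀ i < m, H.Adj (p i) (p (i + 1)))
    (f : V → U) (hf : Emb C (H ⊔ SimpleGraph.edge (p 0) (p 2)) (S.erase (p 1)) univ f) :
    ∃ g, Emb C H S univ g := by
  by_contra hcon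
  obtain ⟨hf1, -, hf3⟩ := hf
  have hf3' : ∀ u ∈ S.erase (p 1), ∀ w ∈ S.erase (p 1), H.Adj u w → ¬ C.Adj (f u) (f w) :=
    fun u hu w hw h => hf3 u hu w hw (Or.inl h)
  have hpe : ∀ i ≤ m, i ≠ 1 → p i ∈ S.erase (p 1) := by
    intro i hi h1
    exact mem_erase.2 ⟨fun h => h1 (hpi i hi 1 (by omega) h), hpS i hi⟩
  let s : ℕ → ℕ := fun i => if i = 0 then 0 else i + 1
  have hs : ∀ i, i + 1 ≤ m → s i ≤ m ∧ s i ≠ 1 := by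
    intro i hi
    simp only [s]
    split_ifs <;> omega
  let x : ℕ → U := fun i => f (p (s i))
  have hxi : ∀ i, i + 1 ≤ m → ∀ j, j + 1 ≤ m → x i = x j → i = j := by
    intro i hi j hj h
    have h1 := hf1 _ (hpe _ (hs i hi).1 (hs i hi).2) _ (hpe _ (hs j hj).1 (hs j hj).2) h
    have h2 := hpi _ (hs i hi).1 _ (hs j hj).1 h1
    simp only [s] at h2
    split_ifs at h2 <;> omega
  have hxa : ∀ i, i + 2 ≤ m → ¬ C.Adj (x i) (x (i + 1)) := by
    intro i hi
    refine hf3 _ (hpe _ (hs i (by omega)).1 (hs i (by omega)).2) _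
      (hpe _ (hs (i + 1) (by omega)).1 (hs (i + 1) (by omega)).2) ?_
    rcases Nat.eq_zero_or_pos i with rfl | h0
    · refine Or.inr ?_
      rw [SimpleGraph.edge_adj]
      refine ⟨Or.inl ⟨by simp [s], by simp [s]⟩, ?_⟩
      intro h
      have := hpi _ (hs 0 (by omega)).1 _ (hs 1 (by omega)).1 h
      simp [s] at this
    · refine Or.inl ?_
      have e1 : s i = i + 1 := by simp [s]; omega
      have e2 : s (i + 1) = i + 1 + 1 := by simp [s]
      rw [e1, e2]
      exact hpa _ (by omega)
  set X := (S.erase (p 1)).image f with hX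
  have hxX : ∀ i, i + 1 ≤ m → x i ∈ X := fun i hi =>
    mem_image_of_mem f (hpe _ (hs i hi).1 (hs i hi).2)
  set P := (range (m + 1)).image p with hP
  have hPn : ∀ u ∈ S, u ∉ P → u ∈ S.erase (p 1) := by
    intro u hu huP
    refine mem_erase.2 ⟨?_, hu⟩
    rintro rfl
    exact huP (mem_image.2 ⟨1, by simp; omega, rfl⟩)
  have hPp : ∀ u, u ∉ P → ∀ i ≤ m, u ≠ p i := by
    rintro u hu i hi rfl
    exact hu (mem_image.2 ⟨i, by simp; omega, rfl⟩)
  have key : ∀ y, y ∉ X → ∀ i j, i < j → j + 2 ≤ m → ¬ C.Adj y (x i) → ¬ C.Adj y (x j) →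
      C.Adj (x (i + 1)) (x (j + 1)) := by
    intro y hy i j hij hj hyi hyj
    by_contra hbl
    let z : ℕ → U := fun t => if t ≤ i then x t else if t = i + 1 then y else
      if t ≤ j + 1 then x (j + i + 2 - t) else x (t - 1)
    have hyx : ∀ i, i + 1 ≤ m → x i ≠ y := fun i hi h => hy (h ▸ hxX i hi)
    apply hcon
    refine replace_path C H S hconn m (by omega) hS p hpS hpd hpi hpa f P hP
      (fun u hu huP w hw hwP => hf1 u (hPn u hu huP) w (hPn w hw hwP))
      (fun u hu huP w hw hwP => hf3' u (hPn u hu huP) w (hPn w hw hwP)) z ?_ ?_ ?_ ?_ ?_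
    · intro a ha b hb hab
      simp only [z] at hab
      split_ifs at hab <;>
      first
      | omega
      | exact absurd hab (hyx _ (by omega))
      | exact absurd hab.symm (hyx _ (by omega))
      | (have := hxi _ (by omega) _ (by omega) hab; omega)
    · intro a ha u hu huP hzu
      have hxu : ∀ i, i + 1 ≤ m → x i ≠ f u := by
        intro i hi h
        have := hf1 _ (hpe _ (hs i hi).1 (hs i hi).2) _ (hPn u hu huP) h
        exact hPp u huP _ (hs i hi).1 this.symm
      simp only [z] at hzu
      split_ifs at hzu
      · exact hxu _ (by omega) hzu
      · exact hy (hzu ▸ mem_image_of_mem f (hPn u hu huP))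
      · exact hxu _ (by omega) hzu
      · exact hxu _ (by omega) hzu
    · intro t ht
      rcases lt_trichotomy t i with h | h | h
      · have e1 : z t = x t := by simp only [z]; rw [if_pos h.le]
        have e2 : z (t + 1) = x (t + 1) := by simp only [z]; rw [if_pos (by omega)]
        rw [e1, e2]; exact hxa t (by omega)
      · subst h
        have e1 : z t = x t := by simp only [z]; rw [if_pos (le_refl _)]
        have e2 : z (t + 1) = y := by simp [z]
        rw [e1, e2]; exact fun h => hyi h.symm
      · rcases eq_or_lt_of_le (Nat.succ_le_of_lt h) with h1 | h1
        · have e1 : z t = y := by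
            simp only [z]; rw [if_neg (by omega), if_pos (by omega)]
          have e2 : z (t + 1) = x j := by
            simp only [z]; rw [if_neg (by omega), if_neg (by omega), if_pos (by omega)]
            congr 1; omega
          rw [e1, e2]; exact hyj
        · rcases lt_trichotomy t (j + 1) with h2 | h2 | h2
          · have e1 : z t = x (j + i + 1 - t + 1) := by
              simp only [z]; rw [if_neg (by omega), if_neg (by omega), if_pos (by omega)]
              congr 1; omega
            have e2 : z (t + 1) = x (j + i + 1 - t) := by
              simp only [z]; rw [if_neg (by omega), if_neg (by omega), if_pos (by omega)]
              congr 1; omega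
            rw [e1, e2]; exact fun h => hxa _ (by omega) h.symm
          · have e1 : z t = x (i + 1) := by
              simp only [z]; rw [if_neg (by omega), if_neg (by omega), if_pos (by omega)]
              congr 1; omega
            have e2 : z (t + 1) = x (j + 1) := by
              simp only [z]; rw [if_neg (by omega), if_neg (by omega), if_neg (by omega)]
              congr 1
            rw [e1, e2]; exact hbl
          · have e1 : z t = x (t - 1) := by
              simp only [z]; rw [if_neg (by omega), if_neg (by omega), if_neg (by omega)]
            have e2 : z (t + 1) = x (t - 1 + 1) := by
              simp only [z]; rw [if_neg (by omega), if_neg (by omega), if_neg (by omega)]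
              congr 1; omega
            rw [e1, e2]; exact hxa _ (by omega)
    · intro u hu huP ha
      have e1 : z 0 = f (p 0) := by simp [z, x, s]
      rw [e1]
      exact hf3' _ (hpe 0 (by omega) (by omega)) u (hPn u hu huP) ha
    · intro u hu huP ha
      have e1 : z m = f (p m) := by
        have : z m = x (m - 1) := by
          simp only [z]; rw [if_neg (by omega), if_neg (by omega), if_neg (by omega)]
        rw [this]
        simp only [x, s]
        rw [if_neg (by omega), Nat.sub_add_cancel (by omega)]
      rw [e1]
      exact hf3' _ (hpe m (by omega) (by omega)) u (hPn u hu huP) ha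
  have hI : ∀ y, y ∉ X → ((range (m - 1)).filter (fun i => ¬ C.Adj y (x i))).card < k := by
    intro y hy
    by_contra hge
    push Not at hge
    apply hno
    refine clique_cyc C k
      (((range (m - 1)).filter (fun i => ¬ C.Adj y (x i))).image (fun i => x (i + 1))) ?_ ?_
    · rw [card_image_of_injOn]
      · exact hge
      · intro a ha b hb hab
        simp only [coe_filter, mem_range, Set.mem_ofPred_eq] at ha hb
        have := hxi _ (by omega) _ (by omega) hab
        omega
    · intro a ha b hb hab
      simp only [mem_image, mem_filter, mem_range] at ha hb
      obtain ⟨i, hi, rfl⟩ := ha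
      obtain ⟨j, hj, rfl⟩ := hb
      rcases lt_trichotomy i j with h | h | h
      · exact key y hy i j h (by omega) hi.2 hj.2
      · subst h; exact absurd rfl hab
      · exact (key y hy j i h (by omega) hj.2 hi.2).symm
  have hXc : X.card + 1 = S.card := by
    rw [hX, card_image_of_injOn (fun a ha b hb h => hf1 a ha b hb h)]
    exact card_erase_add_one (hpS 1 (by omega))
  have hAc : Xᶜ.card = Fintype.card U - X.card := card_compl X
  apply hcon
  have hcl : ∀ y ∈ Xᶜ, ∀ y' ∈ Xᶜ, ¬ C.Adj y y' := by
   refine alt_clique C k hk hodd hno Xᶜ ((range (m - 1)).image x) ?_ ?_ ?_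
   · rw [Finset.disjoint_left]
     intro a ha hb
     simp only [mem_image, mem_range] at hb
     obtain ⟨i, hi, rfl⟩ := hb
     exact (mem_compl.1 ha) (hxX i (by omega))
   · omega
   · intro a ha b hb
     have h1 := hI a (mem_compl.1 ha)
     have h2 := hI b (mem_compl.1 hb)
     have h3 : ((range (m - 1)).filter (fun i => C.Adj a (x i) ∧ C.Adj b (x i))).card ≤
         (((range (m - 1)).image x).filter (fun z => C.Adj a z ∧ C.Adj b z)).card := by
       refine card_le_card_of_injOn x ?_ ?_
       · intro i hi
         simp only [coe_filter, mem_range, Set.mem_ofPred_eq, mem_image] at hi ⊢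
         exact ⟨⟨i, hi.1, rfl⟩, hi.2⟩
       · intro i hi j hj h
         simp only [coe_filter, mem_range, Set.mem_ofPred_eq] at hi hj
         exact hxi _ (by omega) _ (by omega) h
     have h4 : range (m - 1) ⊆ ((range (m - 1)).filter (fun i => C.Adj a (x i) ∧ C.Adj b (x i))) ∪
         (((range (m - 1)).filter (fun i => ¬ C.Adj a (x i))) ∪
         ((range (m - 1)).filter (fun i => ¬ C.Adj b (x i)))) := by
       intro i hi
       simp only [mem_union, mem_filter]
       tauto
     have h5 := (card_le_card h4).trans ((card_union_le _ _).trans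
       (Nat.add_le_add_left (card_union_le _ _) _))
     rw [card_range] at h5
     omega
  obtain ⟨g, hg⟩ := emb_clique C H S Xᶜ hcl (by omega)
  exact ⟨g, hg.mono (subset_univ _)⟩

end RamAux
namespace RamAux
open scoped Classical
open Finset

theorem num_h (k n h : ℕ) (hk : 3 ≤ k) (hh : h * (100 * k ^ 2) ≤ 2 * k * (2 * n)) :
    25 * k * h ≤ n := by
  by_contra hc
  push Not at hc
  have : 4 * k * (n + 1) ≤ 4 * k * (25 * k * h) := Nat.mul_le_mul_left _ hc
  nlinarith

theorem num1 (k n ℓ c L h : ℕ) (hk : 3 ≤ k) (hn : (10 * k) ^ 4 ≤ n) (hl : 64 * k ^ 2 * ℓ ≤ n)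
    (hc : c ≤ n) (hL : c ≤ (12 * k + 2) * L + (18 * k + 2) * ℓ)
    (hh : h * (100 * k ^ 2) ≤ 2 * k * (2 * n)) :
    c + k * (200 * k ^ 2 + 2) + h + 200 * k ^ 2 + 1 ≤ 2 * n - c + L := by
  have h1 := num_h k n h hk hh
  obtain ⟨t, rfl⟩ := Nat.exists_eq_add_of_le hc
  set n := c + t with hnd
  have e : 2 * n - c = n + t := by omega
  rw [e]
  by_contra hcon
  push Not at hcon
  have hs : t + L ≤ k * (200 * k ^ 2 + 2) + h + 200 * k ^ 2 + 1 := by omega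
  have a1 : n ≤ (12 * k + 2) * (t + L) + (18 * k + 2) * ℓ := by nlinarith
  have a2 : n ≤ (12 * k + 2) * (k * (200 * k ^ 2 + 2) + h + 200 * k ^ 2 + 1) + (18 * k + 2) * ℓ :=
    a1.trans (by gcongr)
  have a3 : 1600 * k ^ 2 * n ≤ 1600 * k ^ 2 * ((12 * k + 2) * (k * (200 * k ^ 2 + 2) + 200 * k ^ 2 + 1))
      + 64 * k * (12 * k + 2) * (25 * k * h) + 25 * (18 * k + 2) * (64 * k ^ 2 * ℓ) := by
    calc _ ≤ _ := Nat.mul_le_mul_left (1600 * k ^ 2) a2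
      _ = _ := by ring
  have a4 : 1600 * k ^ 2 * n ≤ 1600 * k ^ 2 * ((12 * k + 2) * (k * (200 * k ^ 2 + 2) + 200 * k ^ 2 + 1))
      + 64 * k * (12 * k + 2) * n + 25 * (18 * k + 2) * n := a3.trans (by gcongr)
  have a5 : (64 * k * (12 * k + 2) + 25 * (18 * k + 2) + 633 * k ^ 2) * n ≤ 1600 * k ^ 2 * n := by
    apply Nat.mul_le_mul_right; nlinarith
  have a6 : k ^ 2 * (633 * n) ≤ k ^ 2 *
      (1600 * ((12 * k + 2) * (k * (200 * k ^ 2 + 2) + 200 * k ^ 2 + 1))) := by nlinarith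
  have a7 := Nat.le_of_mul_le_mul_left a6 (by positivity)
  have a8 : (12 * k + 2) * (k * (200 * k ^ 2 + 2) + 200 * k ^ 2 + 1) ≤ 3400 * k ^ 4 := by
    obtain ⟨j, rfl⟩ := Nat.exists_eq_add_of_le hk
    ring_nf
    nlinarith [Nat.zero_le j, Nat.zero_le (j^2), Nat.zero_le (j^3), Nat.zero_le (j^4)]
  have a9 : 0 < k ^ 4 := by positivity
  have : (10 * k) ^ 4 = 10000 * k ^ 4 := by ring
  omega

theorem num_small (k n h : ℕ) (hk : 3 ≤ k) (hn : (10 * k) ^ 4 ≤ n)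
    (hh : h * (100 * k ^ 2) ≤ 2 * k * (2 * n)) :
    75 * h ≤ n ∧ 90000 * k ^ 2 ≤ n ∧ 270000 * k ≤ n := by
  have h1 := num_h k n h hk hh
  have e : (10 * k) ^ 4 = 10000 * (k ^ 2 * k ^ 2) := by ring
  have h2 : 9 ≤ k ^ 2 := by nlinarith
  have h3 : 9 * k ^ 2 ≤ k ^ 2 * k ^ 2 := Nat.mul_le_mul_right _ h2
  have h4 : 3 * k ≤ k ^ 2 := by nlinarith
  have h5 : 3 * h ≤ k * h := Nat.mul_le_mul_right _ hk
  refine ⟨by nlinarith, by omega, by omega⟩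

theorem num2 (k n ℓ Z : ℕ) (hk : 3 ≤ k) (hn : (10 * k) ^ 4 ≤ n) (hl : 64 * k ^ 2 * ℓ ≤ n)
    (hZ : n ≤ 2 * Z) (d m : ℕ) (hd : 3 ≤ d) (hdm : d * m ≤ 6 * ℓ) (hm : d + 1 ≤ m) :
    m + d * (100 * k ^ 2) ≤ Z := by
  have h2 : 9 ≤ k ^ 2 := by nlinarith
  have h1 : 576 * ℓ ≤ n := by nlinarith
  have h3 : 3 * m ≤ d * m := Nat.mul_le_mul_right _ hd
  have h4 : d * d ≤ 6 * ℓ := by nlinarith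
  have h5 : 9 * (d * (100 * k ^ 2)) ≤ n := by
    by_contra hc
    push Not at hc
    have b1 : n * n < (9 * (d * (100 * k ^ 2))) * (9 * (d * (100 * k ^ 2))) :=
      Nat.mul_lt_mul'' hc hc
    have b2 : (9 * (d * (100 * k ^ 2))) * (9 * (d * (100 * k ^ 2))) = 81 * ((d * d) * (10 * k) ^ 4) := by
      ring
    have b3 : (d * d) * (10 * k) ^ 4 ≤ (6 * ℓ) * n := Nat.mul_le_mul h4 hn
    nlinarith
  omega

/-- leaves -/
theorem leaf_uniq {V : Type*} (H : SimpleGraph V) (S : Finset V) (u a b : V) (hd : dg H S u = 1)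
    (ha : a ∈ S) (hb : b ∈ S) (hua : H.Adj u a) (hub : H.Adj u b) : a = b := by
  unfold dg at hd
  exact card_le_one.1 hd.le a (by simp [ha, hua]) b (by simp [hb, hub])

theorem leaf_parent {V : Type*} (H : SimpleGraph V) (S : Finset V) (hconn : CutConn H S)
    (h3 : 3 ≤ S.card) (u a : V) (hu : u ∈ S) (ha : a ∈ S) (hd : dg H S u = 1)
    (hua : H.Adj u a) : dg H S a ≠ 1 := by
  intro hda
  obtain ⟨s, hs, w, hw, hwn, hsw⟩ := hconn {u, a} (by
    intro z hz
    simp only [mem_insert, mem_singleton] at hz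
    rcases hz with rfl | rfl <;> assumption) (by simp) (by
    intro h
    have := card_le_two (a := u) (b := a)
    rw [h] at this; omega)
  simp only [mem_insert, mem_singleton] at hs hwn
  rcases hs with rfl | rfl
  · exact hwn (Or.inr (leaf_uniq H S s w a hd hw ha hsw hua))
  · exact hwn (Or.inl (leaf_uniq H S s w u hda hw hu hsw hua.symm))

theorem leaf_has {V : Type*} (H : SimpleGraph V) (S : Finset V) (u : V) (hd : dg H S u = 1) :
    ∃ a, a ∈ S ∧ H.Adj u a := by
  have : (S.filter (fun w => H.Adj u w)).Nonempty := by
    rw [← card_pos]; unfold dg at hd; omega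
  obtain ⟨a, ha⟩ := this
  exact ⟨a, (mem_filter.1 ha)⟩

theorem dg_compl {U : Type*} [Fintype U] (C : SimpleGraph U) (X : Finset U) (y : U) :
    dg C univ y = dg C X y + dg C Xᶜ y := by
  unfold dg
  rw [← card_union_of_disjoint (disjoint_filter_filter disjoint_compl_right), ← filter_union]
  simp

theorem dg_le {U : Type*} (C : SimpleGraph U) (X : Finset U) (y : U) : dg C X y ≤ X.card :=
  card_filter_le _ _

theorem dg_not {U : Type*} (C : SimpleGraph U) (X : Finset U) (y : U) :
    dg C X y + (X.filter (fun z => ¬ C.Adj y z)).card = X.card :=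
  card_filter_add_card_filter_not _

/-- Claim A of the star case -/
theorem star_A {V U : Type*} [Fintype U] [Nonempty U] (C : SimpleGraph U) (H : SimpleGraph V)
    (n Δ ℓ : ℕ) (S : Finset V) (hN : Fintype.card U + 1 = 2 * n) (hSn : S.card ≤ n)
    (hconn : CutConn H S) (hS3 : 3 ≤ S.card) (hE : ∀ T, T ⊆ S → E2 H T ≤ 2 * T.card + 2 * ℓ)
    (v : V) (hv : v ∈ S) (hD : Δ + 2 ≤ (S.filter (fun u => dg H S u = 1 ∧ H.Adj u v)).card)
    (X : Finset U) (hX : X.card + 1 = S.card) (w : U) (hw : w ∈ Xᶜ)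
    (hwl : dg C Xᶜ w ≤ Δ) (hwd : S.card + dg C univ w ≤ Fintype.card U)
    (h3 : ∀ Z : ℕ, n ≤ 2 * Z →
      ∀ d m : ℕ, 3 ≤ d → d * m ≤ 6 * ℓ → d + 1 ≤ m → m + d * Δ ≤ Z)
    (hZ1 : n + 2 * (Δ + 1) ≤ 2 * ((Xᶜ).filter (fun y => dg C Xᶜ y ≤ Δ)).card)
    (hZ2 : S.card + 3 * Δ ≤ ((Xᶜ).filter (fun y => dg C Xᶜ y ≤ Δ)).card +
      (S.filter (fun u => dg H S u = 1)).card) :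
    ∃ g, Emb C H S univ g := by
  set Y := Xᶜ with hY
  set Yl := Y.filter (fun y => dg C Y y ≤ Δ) with hYl
  set Z := (Yl.filter (fun y => ¬ C.Adj w y)).erase w with hZ
  set Lf := S.filter (fun u => dg H S u = 1) with hLf
  set Lv := S.filter (fun u => dg H S u = 1 ∧ H.Adj u v) with hLv
  have hvl : dg H S v ≠ 1 := by
    have : Lv ⊆ S.filter (fun u => H.Adj v u) := by
      intro u hu
      simp only [hLv, mem_filter] at hu ⊢
      exact ⟨hu.1, hu.2.2.symm⟩
    have := card_le_card this
    unfold dg; omega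
  have hZY : Z ⊆ Yl := (erase_subset _ _).trans (filter_subset _ _)
  have hZc : Yl.card ≤ Z.card + Δ + 1 := by
    have h1 := dg_not C Yl w
    have h2 : dg C Yl w ≤ dg C Y w := dg_mono C (filter_subset _ _) w
    have h4 : (Yl.filter (fun y => ¬ C.Adj w y)).card ≤ Z.card + 1 := by
      rw [hZ]; have := pred_card_le_card_erase (s := Yl.filter (fun y => ¬ C.Adj w y)) (a := w)
      omega
    omega
  set S1 := (S \ Lf).erase v with hS1
  have hLfS : Lf ⊆ S := filter_subset _ _
  have hvLf : v ∉ Lf := by simp [hLf, hvl]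
  have hS1c : S1.card + Lf.card + 1 = S.card := by
    have h1 : (S \ Lf).card + Lf.card = S.card := card_sdiff_add_card_eq_card hLfS
    have h2 : S1.card + 1 = (S \ Lf).card := card_erase_add_one (by simp [hv, hvLf])
    omega
  obtain ⟨f, hf⟩ := greedy C H Z Δ ℓ
    (fun z hz => (dg_mono C (hZY.trans (filter_subset _ _)) z).trans
      (mem_filter.1 (hZY hz)).2)
    (h3 Z.card (by omega)) S1
    (fun T hT => hE T (hT.trans ((erase_subset _ _).trans sdiff_subset))) (by omega)
  have hv1 : v ∉ S1 := by simp [hS1]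
  have hfw := ext_one C H S1 univ f v hv1 (hf.mono (subset_univ _)) w (mem_univ _)
    (by
      intro h
      obtain ⟨s, hs, hsw⟩ := mem_image.1 h
      have := hf.2.1 s hs
      rw [hsw] at this
      exact (mem_erase.1 this).1 rfl)
    (fun s hs _ => (mem_filter.1 (mem_of_mem_erase (hf.2.1 s hs))).2)
  set f1 := Function.update f v w with hf1
  have hf1v : f1 v = w := by simp [hf1]
  have hf1s : ∀ s ∈ S1, f1 s = f s := fun s hs =>
    Function.update_of_ne (fun h : s = v => hv1 (h ▸ hs)) _ _
  have hpar : ∀ u, ∃ a, u ∈ Lf → a ∈ S ∧ H.Adj u a := by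
    intro u
    by_cases hu : u ∈ Lf
    · obtain ⟨a, ha⟩ := leaf_has H S u (mem_filter.1 hu).2
      exact ⟨a, fun _ => ha⟩
    · exact ⟨u, fun h => absurd h hu⟩
  choose p hp using hpar
  have hpu : ∀ u ∈ Lf, ∀ a ∈ S, H.Adj u a → a = p u := fun u hu a ha hua =>
    leaf_uniq H S u a (p u) (mem_filter.1 hu).2 ha (hp u hu).1 hua (hp u hu).2
  have hpn : ∀ u ∈ Lf, p u ∉ Lf := fun u hu h =>
    leaf_parent H S hconn hS3 u (p u) (hLfS hu) (hp u hu).1 (mem_filter.1 hu).2 (hp u hu).2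
      (mem_filter.1 h).2
  have hS2 : insert v S1 = S \ Lf := insert_erase (by simp [hv, hvLf])
  rw [hS2] at hfw
  have hLvLf : Lv ⊆ Lf := by
    intro u hu
    simp only [hLv, hLf, mem_filter] at hu ⊢
    exact ⟨hu.1, hu.2.1⟩
  have hcc : (S \ Lf).card + Lf.card = S.card := card_sdiff_add_card_eq_card hLfS
  have hcl : (Lf \ Lv).card + Lv.card = Lf.card := card_sdiff_add_card_eq_card hLvLf
  obtain ⟨g, hg, hgf⟩ := leaf_ext C H (S \ Lf) f1 hfw p (S.card - Lv.card) (Lf \ Lv)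
    (by
      rw [Finset.disjoint_left]
      intro a ha hb
      exact (mem_sdiff.1 ha).2 (mem_sdiff.1 hb).1)
    (fun u hu => mem_sdiff.2 ⟨(hp u (mem_sdiff.1 hu).1).1, hpn u (mem_sdiff.1 hu).1⟩)
    (by
      intro u hu a ha hua
      refine hpu u (mem_sdiff.1 hu).1 a ?_ hua
      rcases ha with ha | ha
      · exact (mem_sdiff.1 ha).1
      · exact hLfS (mem_sdiff.1 ha).1)
    (by omega)
    (by
      intro u hu
      have hu' := mem_sdiff.1 hu
      have hpv : p u ≠ v := by
        intro h
        apply hu'.2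
        simp only [hLv, mem_filter]
        have := mem_filter.1 hu'.1
        exact ⟨this.1, this.2, h ▸ (hp u hu'.1).2⟩
      have hps : p u ∈ S1 :=
        mem_erase.2 ⟨hpv, mem_sdiff.2 ⟨(hp u hu'.1).1, hpn u hu'.1⟩⟩
      rw [hf1s _ hps]
      have h1 := (mem_filter.1 (hZY (hf.2.1 _ hps))).2
      have h2 : dg C univ (f (p u)) = dg C X (f (p u)) + dg C Y (f (p u)) := dg_compl C X (f (p u))
      have h4 := dg_le C X (f (p u))
      omega)
  obtain ⟨g', hg', -⟩ := leaf_ext C H (S \ Lf ∪ Lf \ Lv) g hg p S.card Lv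
    (by
      rw [Finset.disjoint_left]
      intro a ha hb
      simp only [mem_union, mem_sdiff] at ha
      rcases ha with ha | ha
      · exact ha.2 (hLvLf hb)
      · exact ha.2 hb)
    (fun u hu => mem_union_left _ (mem_sdiff.2 ⟨(hp u (hLvLf hu)).1, hpn u (hLvLf hu)⟩))
    (by
      intro u hu a ha hua
      refine hpu u (hLvLf hu) a ?_ hua
      simp only [mem_union, mem_sdiff] at ha
      rcases ha with (ha | ha) | ha
      · exact ha.1
      · exact hLfS ha.1
      · exact hLfS (hLvLf ha))
    (by
      have := card_union_le (S \ Lf) (Lf \ Lv)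
      omega)
    (by
      intro u hu
      have : p u = v := by
        have := mem_filter.1 hu
        exact (hpu u (hLvLf hu) v hv this.2.2).symm
      rw [this, hgf v (by simp [hv, hvLf]), hf1v]
      exact hwd)
  refine ⟨g', ?_⟩
  have : S \ Lf ∪ Lf \ Lv ∪ Lv = S := by
    ext a
    simp only [mem_union, mem_sdiff]
    constructor
    · rintro ((h | h) | h)
      · exact h.1
      · exact hLfS h.1
      · exact hLfS (hLvLf h)
    · intro h
      tauto
  rwa [this] at hg'

end RamAux
namespace RamAux
open scoped Classical
open Finset

theorem star_step {V U : Type*} [Fintype U] [Nonempty U] (C : SimpleGraph U) (H : SimpleGraph V)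
    (k n ℓ : ℕ) (hk : 3 ≤ k) (hodd : Odd k) (hno : ¬ HasCopy (SimpleGraph.cycleGraph k) C)
    (hn : (10 * k) ^ 4 ≤ n) (hl : 64 * k ^ 2 * ℓ ≤ n)
    (S : Finset V) (hN : Fintype.card U + 1 = 2 * n) (hSn : S.card ≤ n)
    (hSbig : k + 2 * (100 * k ^ 2) + 2 ≤ S.card)
    (hconn : CutConn H S) (hE : ∀ T, T ⊆ S → E2 H T ≤ 2 * T.card + 2 * ℓ)
    (hL : S.card ≤ (12 * k + 2) * (S.filter (fun u => dg H S u = 1)).card + (18 * k + 2) * ℓ)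
    (v : V) (hv : v ∈ S)
    (hD : 100 * k ^ 2 + 2 ≤ (S.filter (fun u => dg H S u = 1 ∧ H.Adj u v)).card)
    (u0 : V) (hu0 : u0 ∈ S) (hd0 : dg H S u0 = 1) (hu0v : H.Adj u0 v)
    (f : V → U) (hf : Emb C H (S.erase u0) univ f) :
    ∃ g, Emb C H S univ g := by
  set Δ := 100 * k ^ 2 with hΔ
  set X := (S.erase u0).image f with hX
  set x := f v with hx
  have hve : v ∈ S.erase u0 := mem_erase.2 ⟨fun h => hu0v.ne h.symm, hv⟩
  have hxX : x ∈ X := mem_image_of_mem f hve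
  have hXc : X.card + 1 = S.card := by
    rw [hX, card_image_of_injOn (fun a ha b hb h => hf.1 a ha b hb h)]
    exact card_erase_add_one hu0
  by_cases hxr : ∃ y ∈ Xᶜ, ¬ C.Adj x y
  · obtain ⟨y, hy, hxy⟩ := hxr
    have := ext_one C H (S.erase u0) univ f u0 (by simp) hf y (mem_univ _) (mem_compl.1 hy)
      (fun w hw huw => by
        have : w = v := leaf_uniq H S u0 w v hd0 (mem_of_mem_erase hw) hv huw hu0v
        rw [this]; exact fun h => hxy h.symm)
    rw [insert_erase hu0] at this
    exact ⟨_, this⟩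
  push Not at hxr
  have hYc : Xᶜ.card + X.card = Fintype.card U := by
    rw [add_comm]; exact card_add_card_compl X
  set Y := Xᶜ with hY
  have hhigh := high_card C k Δ hk hno x Y hxr
  set Yl := Y.filter (fun y => dg C Y y ≤ Δ) with hYl
  set h := (Y.filter (fun y => ¬ dg C Y y ≤ Δ)).card with hh
  have hYlc : Yl.card + h = Y.card := card_filter_add_card_filter_not _
  have hh' : h * (100 * k ^ 2) ≤ 2 * k * (2 * n) := hhigh.trans (by gcongr; omega)
  have hn1 := num1 k n ℓ S.card _ h hk hn hl hSn hL hh'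
  obtain ⟨hs1, hs2, hs3⟩ := num_small k n h hk hn hh'
  have hkk : 3 * (200 * k ^ 2 + 2) ≤ k * (200 * k ^ 2 + 2) := Nat.mul_le_mul_right _ hk
  by_cases hA : ∃ w ∈ Yl, S.card + dg C univ w ≤ Fintype.card U
  · obtain ⟨w, hw, hwd⟩ := hA
    have hw' := mem_filter.1 hw
    refine star_A C H n Δ ℓ S hN hSn hconn (by omega) hE v hv hD X hXc w hw'.1 hw'.2 hwd
      (fun Z hZ => num2 k n ℓ Z hk hn hl hZ) ?_ ?_
    · rw [← hY, ← hYl]; omega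
    · rw [← hY, ← hYl]; omega
  push Not at hA
  have hmiss : ∀ y ∈ Yl, (X.filter (fun z => ¬ C.Adj y z)).card < Δ := by
    intro y hy
    have h1 := hA y hy
    have h2 : dg C univ y = dg C X y + dg C Y y := dg_compl C X y
    have h3 := (mem_filter.1 hy).2
    have h4 := dg_not C X y
    omega
  have hxY : ∀ y ∈ Y, y ≠ x := fun y hy h => (mem_compl.1 hy) (h ▸ hxX)
  have hAB : Disjoint Yl (X.erase x) := by
    rw [Finset.disjoint_left]
    intro a ha hb
    exact (mem_compl.1 (mem_filter.1 ha).1) (mem_of_mem_erase hb)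
  have hcom : ∀ a ∈ Yl, ∀ b ∈ Yl,
      k ≤ ((X.erase x).filter (fun z => C.Adj a z ∧ C.Adj b z)).card := by
    intro a ha b hb
    have h1 := hmiss a ha
    have h2 := hmiss b hb
    have h3 : X.erase x ⊆ ((X.erase x).filter (fun z => C.Adj a z ∧ C.Adj b z)) ∪
        ((X.filter (fun z => ¬ C.Adj a z)) ∪ (X.filter (fun z => ¬ C.Adj b z))) := by
      intro z hz
      have := mem_of_mem_erase hz
      simp only [mem_union, mem_filter]
      tauto
    have h4 := (card_le_card h3).trans ((card_union_le _ _).trans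
      (Nat.add_le_add_left (card_union_le _ _) _))
    have h5 := card_erase_add_one hxX
    omega
  have hnored : ∀ y ∈ Y, ∀ y' ∈ Yl, ¬ C.Adj y y' := by
    intro y hy y' hy' hyy
    refine hno (alt_cyc C k hk hodd Yl (X.erase x) hAB (by omega) hcom y y' hy' hyy ?_)
    intro a ha l _ hz
    refine ⟨x, fun hxl => ?_, hxr a (mem_filter.1 ha).1, hxr y hy⟩
    rcases hz x hxl with h1 | h1 | h1
    · exact hxY y hy h1.symm
    · exact hxY x (mem_filter.1 h1).1 rfl
    · exact (mem_erase.1 h1).1 rfl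
  have hall : ∀ y ∈ Y, y ∈ Yl := by
    by_contra hc
    push Not at hc
    obtain ⟨y, hy, hyl⟩ := hc
    obtain ⟨t, ht, htk⟩ := degen C k hk hno x (Y \ Yl) ⟨y, mem_sdiff.2 ⟨hy, hyl⟩⟩
      (fun t ht => hxr t (mem_sdiff.1 ht).1)
    have ht' := mem_sdiff.1 ht
    have h1 : ¬ dg C Y t ≤ Δ := fun h => ht'.2 (mem_filter.2 ⟨ht'.1, h⟩)
    have h2 : dg C Y t ≤ dg C (Y \ Yl) t := by
      refine card_le_card ?_
      intro z hz
      simp only [mem_filter, mem_sdiff] at hz ⊢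
      refine ⟨⟨hz.1, fun hzl => hnored t ht'.1 z hzl hz.2⟩, hz.2⟩
    have h3 : k ≤ Δ := by rw [hΔ]; nlinarith
    omega
  obtain ⟨g, hg⟩ := emb_clique C H S Y (fun a ha b hb => hnored a ha b (hall b hb)) (by omega)
  exact ⟨g, hg.mono (subset_univ _)⟩

/-- The Hall step -/
theorem hall_step {V U : Type*} [Fintype U] [Nonempty U] (C : SimpleGraph U) (H : SimpleGraph V)
    (k n ℓ : ℕ) (hk : 3 ≤ k) (hodd : Odd k) (hno : ¬ HasCopy (SimpleGraph.cycleGraph k) C)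
    (hn : (10 * k) ^ 4 ≤ n) (hl : 64 * k ^ 2 * ℓ ≤ n)
    (S : Finset V) (hN : Fintype.card U + 1 = 2 * n) (hSn : S.card ≤ n)
    (hS3 : 3 ≤ S.card)
    (hconn : CutConn H S) (hE : ∀ T, T ⊆ S → E2 H T ≤ 2 * T.card + 2 * ℓ)
    (hL : S.card ≤ (12 * k + 2) * (S.filter (fun u => dg H S u = 1)).card + (18 * k + 2) * ℓ)
    (hD : ∀ v ∈ S, (S.filter (fun u => dg H S u = 1 ∧ H.Adj u v)).card ≤ 200 * k ^ 2 + 2)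
    (f : V → U) (hf : Emb C H (S \ S.filter (fun u => dg H S u = 1)) univ f) :
    ∃ g, Emb C H S univ g := by
  set Lf := S.filter (fun u => dg H S u = 1) with hLf
  have hLfS : Lf ⊆ S := filter_subset _ _
  have hpar : ∀ u, ∃ a, u ∈ Lf → a ∈ S ∧ H.Adj u a := by
    intro u
    by_cases hu : u ∈ Lf
    · obtain ⟨a, ha⟩ := leaf_has H S u (mem_filter.1 hu).2
      exact ⟨a, fun _ => ha⟩
    · exact ⟨u, fun h => absurd h hu⟩
  choose p hp using hpar
  have hpu : ∀ u ∈ Lf, ∀ a ∈ S, H.Adj u a → a = p u := fun u hu a ha hua =>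
    leaf_uniq H S u a (p u) (mem_filter.1 hu).2 ha (hp u hu).1 hua (hp u hu).2
  have hpn : ∀ u ∈ Lf, p u ∈ S \ Lf := fun u hu => mem_sdiff.2 ⟨(hp u hu).1, fun h =>
    leaf_parent H S hconn hS3 u (p u) (hLfS hu) (hp u hu).1 (mem_filter.1 hu).2 (hp u hu).2
      (mem_filter.1 h).2⟩
  set X := (S \ Lf).image f with hX
  have hXc : X.card + Lf.card = S.card := by
    rw [hX, card_image_of_injOn (fun a ha b hb h => hf.1 a ha b hb h)]
    exact card_sdiff_add_card_eq_card hLfS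
  let t : Lf → Finset U := fun u => Xᶜ.filter (fun z => ¬ C.Adj z (f (p u)))
  by_cases hhall : ∀ A : Finset Lf, A.card ≤ (A.biUnion t).card
  · obtain ⟨e, hei, het⟩ := (Finset.all_card_le_biUnion_card_iff_exists_injective t).1 hhall
    have het' : ∀ u : Lf, e u ∉ X ∧ ¬ C.Adj (e u) (f (p u)) := by
      intro u
      have := mem_filter.1 (het u)
      exact ⟨mem_compl.1 this.1, this.2⟩
    have hmem : ∀ a ∈ S, a ∉ Lf → a ∈ S \ Lf := fun a h1 h2 => mem_sdiff.2 ⟨h1, h2⟩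
    refine ⟨fun u => if h : u ∈ Lf then e ⟨u, h⟩ else f u, ?_, fun _ _ => mem_univ _, ?_⟩
    · intro a ha b hb hab
      by_cases h1 : a ∈ Lf <;> by_cases h2 : b ∈ Lf <;> simp only [h1, h2, dif_pos, dif_neg,
        not_false_eq_true] at hab
      · simpa using hei hab
      · exact absurd (hab ▸ mem_image_of_mem f (hmem b hb h2)) (het' ⟨a, h1⟩).1
      · exact absurd (hab ▸ mem_image_of_mem f (hmem a ha h1)) (het' ⟨b, h2⟩).1
      · exact hf.1 a (hmem a ha h1) b (hmem b hb h2) hab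
    · intro a ha b hb hab
      by_cases h1 : a ∈ Lf <;> by_cases h2 : b ∈ Lf <;> simp only [h1, h2, dif_pos, dif_neg,
        not_false_eq_true]
      · have h3 := hpu a h1 b hb hab
        have h4 := hpn a h1
        rw [← h3] at h4
        exact absurd h2 (mem_sdiff.1 h4).2
      · rw [hpu a h1 b hb hab]
        exact (het' ⟨a, h1⟩).2
      · rw [hpu b h2 a ha hab.symm]
        exact fun h => (het' ⟨b, h2⟩).2 h.symm
      · exact hf.2.2 a (hmem a ha h1) b (hmem b hb h2) hab
  push Not at hhall
  obtain ⟨A, hA⟩ := hhall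
  set P := A.image (fun u : Lf => f (p u)) with hP
  set Y := Xᶜ \ A.biUnion t with hY
  have hYred : ∀ y ∈ Y, ∀ x ∈ P, C.Adj x y := by
    intro y hy x hx
    obtain ⟨u, hu, rfl⟩ := mem_image.1 hx
    have hy' := mem_sdiff.1 hy
    by_contra hc
    exact hy'.2 (mem_biUnion.2 ⟨u, hu, mem_filter.2 ⟨hy'.1, fun h => hc h.symm⟩⟩)
  have hYc : Fintype.card U + 1 ≤ Y.card + X.card + A.card := by
    have h1 := card_add_card_compl X
    have h2 : Xᶜ.card - (A.biUnion t).card ≤ Y.card := le_card_sdiff (A.biUnion t) Xᶜ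
    omega
  have hAL : A.card ≤ Lf.card := by simpa using card_le_univ A
  have hPX : P ⊆ X := by
    intro x hx
    obtain ⟨u, hu, rfl⟩ := mem_image.1 hx
    exact mem_image_of_mem f (hpn u u.2)
  by_cases hPk : k ≤ P.card
  · have hYk : k ≤ Y.card := by
      have : P.card ≤ X.card := card_le_card hPX
      omega
    have hcl := alt_clique C k hk hodd hno Y P (by
      rw [Finset.disjoint_left]
      intro a ha hb
      exact (mem_compl.1 (mem_sdiff.1 ha).1) (hPX hb)) hYk (by
      intro a ha b hb
      rw [filter_true_of_mem (fun z hz => ⟨(hYred a ha z hz).symm, (hYred b hb z hz).symm⟩)]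
      exact hPk)
    obtain ⟨g, hg⟩ := emb_clique C H S Y hcl (by omega)
    exact ⟨g, hg.mono (subset_univ _)⟩
  push Not at hPk
  have hAk : A.card ≤ (200 * k ^ 2 + 2) * P.card := by
    refine card_le_mul_card_image A _ ?_
    intro x hx
    obtain ⟨u, hu, rfl⟩ := mem_image.1 hx
    refine le_trans ?_ (hD (p u) (hp u u.2).1)
    refine card_le_card_of_injOn (fun u : Lf => (u : V)) ?_ (fun a _ b _ h => Subtype.ext h)
    intro a ha
    have ha' := (mem_filter.1 (mem_coe.1 ha)).2
    have hpa : p a = p u := hf.1 _ (hpn a a.2) _ (hpn u u.2) ha'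
    have hal := mem_filter.1 a.2
    refine mem_coe.2 (mem_filter.2 ⟨hal.1, hal.2, ?_⟩)
    rw [← hpa]; exact (hp a a.2).2
  have hAk2 : A.card ≤ k * (200 * k ^ 2 + 2) := by
    refine hAk.trans ?_
    rw [mul_comm]
    exact Nat.mul_le_mul_right _ hPk.le
  have hPne : P.Nonempty := by
    rw [hP, image_nonempty, ← card_pos]; omega
  obtain ⟨x, hx⟩ := hPne
  set Δ := 100 * k ^ 2 with hΔ
  have hhigh := high_card C k Δ hk hno x Y (fun y hy => hYred y hy x hx)
  set Yl := Y.filter (fun y => dg C Y y ≤ Δ) with hYl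
  set h := (Y.filter (fun y => ¬ dg C Y y ≤ Δ)).card with hh
  have hYlc : Yl.card + h = Y.card := card_filter_add_card_filter_not _
  have hYn : Y.card ≤ 2 * n := by
    have := card_le_univ Y
    omega
  have hh' : h * (100 * k ^ 2) ≤ 2 * k * (2 * n) := hhigh.trans (by gcongr)
  have hn1 := num1 k n ℓ S.card _ h hk hn hl hSn hL hh'
  obtain ⟨hs1, hs2, hs3⟩ := num_small k n h hk hn hh'
  obtain ⟨g, hg⟩ := greedy C H Yl Δ ℓ
    (fun z hz => (dg_mono C (filter_subset _ _) z).trans (mem_filter.1 hz).2)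
    (num2 k n ℓ Yl.card hk hn hl (by omega)) S hE (by omega)
  exact ⟨g, hg.mono (subset_univ _)⟩

end RamAux
namespace RamAux
open scoped Classical
open Finset

theorem cut_leaves {V : Type*} (H : SimpleGraph V) (S M : Finset V) (hconn : CutConn H S)
    (hM : ∀ u ∈ M, dg H S u = 1) : CutConn H (S \ M) := by
  intro T hT hne hTn
  obtain ⟨s, hs, hsT⟩ : ∃ s ∈ S \ M, s ∉ T := by
    by_contra hc
    push Not at hc
    exact hTn (Subset.antisymm hT hc)
  have hs' := mem_sdiff.1 hs
  obtain ⟨u, hu, w, hw, hwn, huw⟩ := hconn (T ∪ (S ∩ M).filter (fun u => ∃ a ∈ T, H.Adj u a))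
    (by
      intro a ha
      simp only [mem_union, mem_filter, mem_inter] at ha
      rcases ha with ha | ha
      · exact (mem_sdiff.1 (hT ha)).1
      · exact ha.1.1)
    (hne.mono subset_union_left)
    (by
      intro h
      have : s ∈ T ∪ (S ∩ M).filter (fun u => ∃ a ∈ T, H.Adj u a) := by
        rw [h]; exact hs'.1
      simp only [mem_union, mem_filter, mem_inter] at this
      tauto)
  simp only [mem_union, mem_filter, mem_inter, not_or] at hu hwn
  rcases hu with hu | hu
  · refine ⟨u, hu, w, mem_sdiff.2 ⟨hw, fun hwM => ?_⟩, hwn.1, huw⟩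
    exact hwn.2 ⟨⟨hw, hwM⟩, u, hu, huw.symm⟩
  · obtain ⟨⟨huS, huM⟩, a, ha, hua⟩ := hu
    have := leaf_uniq H S u a w (hM u huM) (mem_sdiff.1 (hT ha)).1 hw hua huw
    exact absurd (this ▸ ha) hwn.1

theorem cut_path {V : Type*} (H : SimpleGraph V) (S : Finset V) (hconn : CutConn H S)
    (a b c : V) (ha : a ∈ S) (hb : b ∈ S) (hc : c ∈ S) (hab : H.Adj a b) (hbc : H.Adj b c)
    (hac : a ≠ c) (hd : dg H S b = 2) : CutConn (H ⊔ SimpleGraph.edge a c) (S.erase b) := by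
  have hnb : ∀ w ∈ S, H.Adj b w → w = a ∨ w = c := fun w hw hbw =>
    two_nbrs H S b a c w hd ha hc hw hac hab.symm hbc hbw
  have hae : a ∈ S.erase b := mem_erase.2 ⟨hab.ne, ha⟩
  have hce : c ∈ S.erase b := mem_erase.2 ⟨hbc.ne', hc⟩
  have hadj : (H ⊔ SimpleGraph.edge a c).Adj a c := by
    simp [SimpleGraph.edge_adj, hac]
  intro T hT hne hTn
  have hbT : b ∉ T := fun h => (mem_erase.1 (hT h)).1 rfl
  by_cases h1 : a ∈ T <;> by_cases h2 : c ∈ T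
  · obtain ⟨u, hu, w, hw, hwn, huw⟩ := hconn (insert b T)
      (insert_subset hb (hT.trans (erase_subset _ _))) (insert_nonempty _ _)
      (fun h => hTn (by rw [← h, erase_insert hbT]))
    simp only [mem_insert, not_or] at hu hwn
    rcases hu with rfl | hu
    · rcases hnb w hw huw with rfl | rfl
      · exact absurd h1 hwn.2
      · exact absurd h2 hwn.2
    · exact ⟨u, hu, w, mem_erase.2 ⟨hwn.1, hw⟩, hwn.2, Or.inl huw⟩
  · exact ⟨a, h1, c, hce, h2, hadj⟩
  · exact ⟨c, h2, a, hae, h1, hadj.symm⟩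
  · obtain ⟨u, hu, w, hw, hwn, huw⟩ := hconn T (hT.trans (erase_subset _ _)) hne
      (fun h => hbT (h ▸ hb))
    refine ⟨u, hu, w, mem_erase.2 ⟨?_, hw⟩, hwn, Or.inl huw⟩
    rintro rfl
    rcases hnb u (mem_of_mem_erase (hT hu)) huw.symm with rfl | rfl
    · exact h1 hu
    · exact h2 hu

theorem E2_edge {V : Type*} (H : SimpleGraph V) (S : Finset V) (a c : V) :
    E2 (H ⊔ SimpleGraph.edge a c) S ≤ E2 H S + 2 := by
  have h1 : ∀ u ∈ S, dg (H ⊔ SimpleGraph.edge a c) S u ≤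
      dg H S u + ((if u = a then 1 else 0) + (if u = c then 1 else 0)) := by
    intro u _
    have h2 : dg (H ⊔ SimpleGraph.edge a c) S u ≤ (S.filter (fun w => H.Adj u w) ∪
          ((if u = a then {c} else ∅) ∪ (if u = c then {a} else ∅))).card := by
      refine card_le_card ?_
      intro w hw
      simp only [mem_filter, SimpleGraph.sup_adj, SimpleGraph.edge_adj] at hw
      simp only [mem_union, mem_filter]
      rcases hw with ⟨hw, h | ⟨⟨rfl, rfl⟩ | ⟨rfl, rfl⟩, h⟩⟩
      · exact Or.inl ⟨hw, h⟩
      · right; left; simp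
      · right; right; simp
    have h4 := h2.trans ((card_union_le _ _).trans
      (Nat.add_le_add_left (card_union_le _ _) _))
    refine h4.trans (Nat.add_le_add_left (Nat.add_le_add ?_ ?_) _) <;> split_ifs <;> simp
  unfold E2
  refine (sum_le_sum h1).trans ?_
  rw [sum_add_distrib, sum_add_distrib]
  have h3 : ∀ b : V, ∑ u ∈ S, (if u = b then 1 else 0) ≤ 1 := by
    intro b
    rw [sum_ite_eq']
    split_ifs <;> simp
  have := h3 a
  have := h3 c
  omega

theorem main {V U : Type*} [Fintype U] [Nonempty U] (C : SimpleGraph U)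
    (k n ℓ : ℕ) (hk : 3 ≤ k) (hodd : Odd k) (hno : ¬ HasCopy (SimpleGraph.cycleGraph k) C)
    (hn : (10 * k) ^ 4 ≤ n) (hl : 64 * k ^ 2 * ℓ ≤ n) (hN : Fintype.card U + 1 = 2 * n) (m : ℕ) :
    ∀ (H : SimpleGraph V) (S : Finset V), S.card = m → S.card ≤ n → CutConn H S →
      E2 H S ≤ 2 * S.card + 2 * ℓ → ∃ f, Emb C H S univ f := by
  induction m using Nat.strong_induction_on with
  | _ m ih =>
  intro H S hSm hSn hconn hE2
  have hE : ∀ T, T ⊆ S → E2 H T ≤ 2 * T.card + 2 * ℓ := fun T hT =>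
    hereditary H S ℓ hconn hE2 _ T hT rfl
  have hk2 : 3 * k ≤ k ^ 2 := by nlinarith
  have hnpos : 0 < n := lt_of_lt_of_le (by positivity) hn
  by_cases hb : (2 * k + 1) * S.card ≤ Fintype.card U
  · refine base C H k ℓ hk hno ?_ S hE hb
    have : (6 * k + 2) * ℓ ≤ 64 * k ^ 2 * ℓ := Nat.mul_le_mul_right _ (by omega)
    omega
  push Not at hb
  have hb2 : 2 * n ≤ (2 * k + 1) * S.card := by omega
  have hbig : k + 2 * (100 * k ^ 2) + 3 ≤ S.card := by
    by_contra hc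
    push Not at hc
    have h1 : (2 * k + 1) * S.card ≤ (2 * k + 1) * (k + 2 * (100 * k ^ 2) + 3) :=
      Nat.mul_le_mul_left _ hc.le
    have h2 : (2 * k + 1) * (k + 2 * (100 * k ^ 2) + 3) < 2 * (10 * k) ^ 4 := by
      obtain ⟨j, rfl⟩ := Nat.exists_eq_add_of_le hk
      ring_nf
      nlinarith [Nat.zero_le j, Nat.zero_le (j^2), Nat.zero_le (j^3), Nat.zero_le (j^4)]
    omega
  have hpos : ∀ u ∈ S, 1 ≤ dg H S u := by
    intro u hu
    obtain ⟨s, hs, w, hw, -, hsw⟩ := hconn {u} (by simpa using hu) (by simp) (by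
      intro h
      have := card_singleton u
      rw [h] at this; omega)
    rw [mem_singleton] at hs
    subst hs
    exact card_pos.2 ⟨w, mem_filter.2 ⟨hw, hsw⟩⟩
  by_cases hq : ∀ l : List V, l.Nodup → l.IsChain H.Adj → (∀ u ∈ l, u ∈ S ∧ dg H S u = 2) →
      l.length ≤ 3 * k
  · have hL := leaf_count H S (3 * k) ℓ hconn (by omega) hpos hE2 hq
    have hL' : S.card ≤ (12 * k + 2) * (S.filter (fun u => dg H S u = 1)).card +
        (18 * k + 2) * ℓ := by
      have e1 : 4 * (3 * k) = 12 * k := by ring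
      have e2 : 6 * (3 * k) = 18 * k := by ring
      rwa [e1, e2] at hL
    have hL1 : 1 ≤ (S.filter (fun u => dg H S u = 1)).card := by
      by_contra hc
      have h0 : (S.filter (fun u => dg H S u = 1)).card = 0 := by omega
      rw [h0, mul_zero, zero_add] at hL'
      have h1 : 2 * n ≤ (2 * k + 1) * ((18 * k + 2) * ℓ) := hb2.trans (Nat.mul_le_mul_left _ hL')
      have h2 : (2 * k + 1) * ((18 * k + 2) * ℓ) ≤ 64 * k ^ 2 * ℓ := by
        rw [← mul_assoc]
        apply Nat.mul_le_mul_right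
        nlinarith
      omega
    by_cases hst : ∃ v ∈ S, 100 * k ^ 2 + 2 ≤ (S.filter (fun u => dg H S u = 1 ∧ H.Adj u v)).card
    · obtain ⟨v, hv, hD⟩ := hst
      obtain ⟨u0, hu0⟩ : (S.filter (fun u => dg H S u = 1 ∧ H.Adj u v)).Nonempty := by
        rw [← card_pos]; omega
      obtain ⟨hu0, hd0, hu0v⟩ := mem_filter.1 hu0
      have hce := card_erase_add_one hu0
      obtain ⟨f, hf⟩ := ih (S.erase u0).card (by omega) H (S.erase u0) rfl (by omega)
        (by
          have := cut_leaves H S {u0} hconn (by simpa using hd0)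
          rwa [sdiff_singleton_eq_erase] at this)
        (hE _ (erase_subset _ _))
      exact star_step C H k n ℓ hk hodd hno hn hl S hN hSn (by omega) hconn hE hL' v hv hD
        u0 hu0 hd0 hu0v f hf
    · push Not at hst
      have hce : (S \ S.filter (fun u => dg H S u = 1)).card +
          (S.filter (fun u => dg H S u = 1)).card = S.card :=
        card_sdiff_add_card_eq_card (filter_subset _ _)
      obtain ⟨f, hf⟩ := ih (S \ S.filter (fun u => dg H S u = 1)).card (by omega) H
        (S \ S.filter (fun u => dg H S u = 1)) rfl (by omega)
        (cut_leaves H S _ hconn (fun u hu => (mem_filter.1 hu).2))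
        (hE _ sdiff_subset)
      exact hall_step C H k n ℓ hk hodd hno hn hl S hN hSn (by omega) hconn hE hL'
        (fun v hv => by have := hst v hv; omega) f hf
  · push Not at hq
    obtain ⟨l, hnd, hch, hlS, hlen⟩ := hq
    obtain ⟨v0, -⟩ : S.Nonempty := by rw [← card_pos]; omega
    set p : ℕ → V := fun i => l.getD i v0 with hp
    have hpe : ∀ i (hi : i < l.length), p i = l[i] := fun i hi => by
      simp [hp, hi]
    have hpm : ∀ i, i < l.length → p i ∈ S ∧ dg H S (p i) = 2 := fun i hi => by
      rw [hpe i hi]; exact hlS _ (List.getElem_mem hi)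
    have hpi : ∀ i ≤ 3 * k, ∀ j ≤ 3 * k, p i = p j → i = j := by
      intro i hi j hj hij
      rw [hpe i (by omega), hpe j (by omega)] at hij
      exact (List.Nodup.getElem_inj_iff hnd).1 hij
    have hpa : ∀ i < 3 * k, H.Adj (p i) (p (i + 1)) := by
      intro i hi
      rw [hpe i (by omega), hpe (i + 1) (by omega)]
      rw [List.isChain_iff_getElem] at hch
      exact hch i (by omega)
    have hp1 := hpm 1 (by omega)
    have hce := card_erase_add_one hp1.1
    have hEe := E2_erase H S (p 1) hp1.1
    have hEd := E2_edge H (S.erase (p 1)) (p 0) (p 2)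
    rw [hp1.2] at hEe
    obtain ⟨f, hf⟩ := ih (S.erase (p 1)).card (by omega) (H ⊔ SimpleGraph.edge (p 0) (p 2))
      (S.erase (p 1)) rfl (by omega)
      (cut_path H S hconn (p 0) (p 1) (p 2) (hpm 0 (by omega)).1 hp1.1 (hpm 2 (by omega)).1
        (hpa 0 (by omega)) (hpa 1 (by omega))
        (fun h => absurd (hpi 0 (by omega) 2 (by omega) h) (by norm_num)) hp1.2)
      (by omega)
    exact path_step C H k hk hodd hno S hconn (by omega) (3 * k) rfl (by omega) p
      (fun i hi => (hpm i (by omega)).1) (fun i hi => (hpm i (by omega)).2) hpi hpa f hf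

end RamAux
namespace RamAux
open scoped Classical
open Finset

theorem upper {V : Type*} [Fintype V] (H : SimpleGraph V) (k ℓ : ℕ) (hk : 3 ≤ k) (hodd : Odd k)
    (hconn : H.Connected) (hn : (10 * k) ^ 4 ≤ Fintype.card V)
    (hl : 64 * k ^ 2 * ℓ ≤ Fintype.card V) (hE : E2 H univ ≤ 2 * Fintype.card V + 2 * ℓ)
    (C : SimpleGraph (Fin (2 * Fintype.card V - 1))) :
    HasCopy (SimpleGraph.cycleGraph k) C ∨ HasCopy H Cᶜ := by
  by_cases hno : HasCopy (SimpleGraph.cycleGraph k) C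
  · exact Or.inl hno
  right
  have hnpos : 0 < Fintype.card V := lt_of_lt_of_le (by positivity) hn
  haveI : Nonempty (Fin (2 * Fintype.card V - 1)) := ⟨⟨0, by omega⟩⟩
  obtain ⟨f, hf1, -, hf3⟩ := main C k (Fintype.card V) ℓ hk hodd hno hn hl
    (by rw [Fintype.card_fin]; omega) _ H univ rfl (by rw [card_univ])
    (by
      intro T _ hT hTn
      obtain ⟨a, ha⟩ := hT
      obtain ⟨b, hb⟩ : ∃ b, b ∉ T := by
        by_contra hc
        push Not at hc
        exact hTn (eq_univ_iff_forall.2 hc)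
      obtain ⟨w⟩ := hconn.preconnected a b
      obtain ⟨d, -, h1, h2⟩ := w.exists_boundary_dart (T : Set V) (by simpa using ha)
        (by simpa using hb)
      exact ⟨d.fst, by simpa using h1, d.snd, mem_univ _, by simpa using h2, d.adj⟩)
    (by rw [card_univ]; exact hE)
  have hinj : Function.Injective f := fun a b h => hf1 a (mem_univ _) b (mem_univ _) h
  refine ⟨⟨f, ?_⟩, hinj⟩
  intro a b hab
  rw [SimpleGraph.compl_adj]
  exact ⟨fun h => hab.ne (hinj h), hf3 a (mem_univ _) b (mem_univ _) hab⟩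

theorem lower {V : Type*} [Fintype V] (H : SimpleGraph V) (k N : ℕ) (hk : 3 ≤ k) (hodd : Odd k)
    (hconn : H.Connected) (hN : N + 2 ≤ 2 * Fintype.card V)
    (hR : ∀ C : SimpleGraph (Fin N), HasCopy (SimpleGraph.cycleGraph k) C ∨ HasCopy H Cᶜ) :
    False := by
  set n := Fintype.card V with hn
  let c : Fin N → Bool := fun i => decide (i.1 < n - 1)
  rcases hR ((⊤ : SimpleGraph Bool).comap c) with ⟨f, -⟩ | ⟨f, hf⟩
  · have hcol : (SimpleGraph.cycleGraph k).Colorable 2 := by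
      have : (SimpleGraph.cycleGraph k).Coloring Bool :=
        SimpleGraph.Coloring.mk (fun i => c (f i)) (fun {a b} hab => by
          have := f.map_adj hab
          simpa [SimpleGraph.comap_adj] using this)
      simpa using this.colorable
    have h1 := hcol.chromaticNumber_le
    rw [SimpleGraph.chromaticNumber_cycleGraph_of_odd k (by omega) hodd] at h1
    norm_cast at h1
  · have hadj : ∀ a b, H.Adj a b → c (f a) = c (f b) := by
      intro a b hab
      have := f.map_adj hab
      rw [SimpleGraph.compl_adj] at this
      have h2 := this.2
      simpa [SimpleGraph.comap_adj] using h2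
    have hall : ∀ a b, c (f a) = c (f b) := by
      intro a b
      by_contra hc
      obtain ⟨w⟩ := hconn.preconnected a b
      obtain ⟨d, -, h1, h2⟩ := w.exists_boundary_dart {x | c (f x) = c (f a)} rfl
        (fun h => hc (Eq.symm h))
      exact h2 ((hadj _ _ d.adj).symm.trans h1)
    obtain ⟨a0⟩ := hconn.nonempty
    have hcard : n = (univ.image (fun a => (f a).1)).card := by
      rw [card_image_of_injective _ (fun a b h => hf (Fin.ext h)), card_univ]
    have hnp : 0 < n := Fintype.card_pos_iff.2 ⟨a0⟩
    by_cases h : (f a0).1 < n - 1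
    · have : univ.image (fun a => (f a).1) ⊆ range (n - 1) := by
        intro x hx
        obtain ⟨a, -, rfl⟩ := mem_image.1 hx
        have := hall a a0
        simp only [c, decide_eq_decide] at this
        exact mem_range.2 (this.2 h)
      have := card_le_card this
      rw [card_range] at this
      omega
    · have : univ.image (fun a => (f a).1) ⊆ Ico (n - 1) N := by
        intro x hx
        obtain ⟨a, -, rfl⟩ := mem_image.1 hx
        have := hall a a0
        simp only [c, decide_eq_decide] at this
        have h2 : ¬ (f a).1 < n - 1 := fun h' => h (this.1 h')
        exact mem_Ico.2 ⟨by omega, (f a).2⟩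
      have := card_le_card this
      rw [Nat.card_Ico] at this
      omega

end RamAux

theorem stmt_13 (k : ℕ) (hk : 3 ≤ k) (hodd : Odd k) (V : Type) [Fintype V] [DecidableEq V]
    (H : SimpleGraph V) [DecidableRel H.Adj] (hconn : H.Connected)
    (hn : (10 * k) ^ 4 ≤ Fintype.card V)
    (hdeg : (2 * H.edgeFinset.card : ℝ) / Fintype.card V ≤ 2 * (1 + 1 / (8 * k : ℝ) ^ 2)) :
    ramseyNumber (SimpleGraph.cycleGraph k) H = 2 * Fintype.card V - 1 := by
  have hnpos : 0 < Fintype.card V := lt_of_lt_of_le (by positivity) hn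
  have hE : RamAux.E2 H Finset.univ = 2 * H.edgeFinset.card := by
    rw [← H.sum_degrees_eq_twice_card_edges]
    unfold RamAux.E2 RamAux.dg
    refine Finset.sum_congr rfl (fun u _ => ?_)
    rw [← H.card_neighborFinset_eq_degree]
    congr 1
    ext w
    simp
  have hnat : 64 * k ^ 2 * H.edgeFinset.card ≤ 64 * k ^ 2 * Fintype.card V + Fintype.card V := by
    have hn0 : (0 : ℝ) < Fintype.card V := by exact_mod_cast hnpos
    have hk0 : (0 : ℝ) < k := by exact_mod_cast (by omega : 0 < k)
    rw [div_le_iff₀ hn0] at hdeg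
    have h2 : (64 * k ^ 2 * H.edgeFinset.card : ℝ) ≤
        64 * k ^ 2 * Fintype.card V + Fintype.card V := by
      have h3 := mul_le_mul_of_nonneg_left hdeg (by positivity : (0 : ℝ) ≤ 32 * k ^ 2)
      have h4 : (32 * (k : ℝ) ^ 2) * (2 * (1 + 1 / (8 * k : ℝ) ^ 2) * Fintype.card V) =
          64 * k ^ 2 * Fintype.card V + Fintype.card V := by
        field_simp
        ring
      linarith
    exact_mod_cast h2
  have hl : 64 * k ^ 2 * (H.edgeFinset.card - Fintype.card V) ≤ Fintype.card V := by
    rw [Nat.mul_sub]; omega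
  unfold ramseyNumber
  have hmem : 2 * Fintype.card V - 1 ∈ {N : ℕ | ∀ C : SimpleGraph (Fin N),
      HasCopy (SimpleGraph.cycleGraph k) C ∨ HasCopy H Cᶜ} := fun C =>
    RamAux.upper H k (H.edgeFinset.card - Fintype.card V) hk hodd hconn hn hl
      (by rw [hE]; omega) C
  refine le_antisymm (Nat.sInf_le hmem) (le_csInf ⟨_, hmem⟩ ?_)
  intro N hN
  by_contra hc
  exact RamAux.lower H k N hk hodd hconn (by omega) hN
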